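/- Assume (A_f) holds with parameters ρ > 0, α ≥ 0, γ > −α, and let (S,Y,B) be an adapted process with B a one-dimensional Brownian motion, Y a nonnegative process satisfying hypothesis (A_Y) (parts (a)–(d)), and S a nonnegative process solving S_t = S_0 + ∫_0^t (2f(s,Y_s)+1) ds + 2∫_0^t √(S_s) dB_s. Then for X_t = √(S_t): (1) almost surely lim_{t→∞} (log X_t)/(log t) = (1+γ+α)/2; and (2) t^{-(1+γ+α)/2} X_t converges in distribution to (2ρÃ)^{1/2} as t → ∞, where Ã is the distributional limit in (A_Y)(b). -/

import Mathlib

open MeasureTheory Filter Set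

/-- The martingale part of the SDE `S_t = S_0 + ∫_0^t (2 f(s,Y_s) + 1) ds + M_t`,
i.e. `M_t = 2∫_0^t √(S_s) dB_s` recovered from the dynamics of `S`. -/
noncomputable def driftM {Ω : Type*} (f : ℝ → ℝ → ℝ) (Y S : ℝ → Ω → ℝ) (t : ℝ) (ω : Ω) : ℝ :=
  S t ω - S 0 ω - ∫ s in (0:ℝ)..t, (2 * f s (Y s ω) + 1)

lemma sd_one_add_rpow_close (γ : ℝ) (ε : ℝ) (hε : 0 < ε) :
    ∃ r ≥ (1:ℝ), ∀ s : ℝ, r ≤ s → |(1 + s) ^ γ - s ^ γ| ≤ ε * s ^ γ := by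
  have h1 : Tendsto (fun s : ℝ => (1 + s⁻¹) ^ γ) atTop (nhds 1) := by
    have h := (tendsto_inv_atTop_zero (𝕜 := ℝ)).const_add 1
    have h2 := h.rpow_const (p := γ) (Or.inl (by norm_num))
    simpa using h2
  have h2 := (Metric.tendsto_nhds.1 h1 ε hε)
  obtain ⟨r, hr⟩ := eventually_atTop.1 h2
  refine ⟨max r 1, le_max_right _ _, fun s hs => ?_⟩
  have hs1 : 1 ≤ s := (le_max_right _ _).trans hs
  have hs0 : 0 < s := by linarith
  have h3 := hr s ((le_max_left _ _).trans hs)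
  rw [Real.dist_eq] at h3
  have h4 : (1 + s) ^ γ = s ^ γ * (1 + s⁻¹) ^ γ := by
    rw [← Real.mul_rpow hs0.le (by positivity)]
    congr 1
    field_simp
    ring
  have h5 : 0 < s ^ γ := Real.rpow_pos_of_pos hs0 _
  rw [h4, show s ^ γ * (1 + s⁻¹) ^ γ - s ^ γ = s ^ γ * ((1 + s⁻¹) ^ γ - 1) by ring, abs_mul,
    abs_of_pos h5, mul_comm]
  exact mul_le_mul_of_nonneg_right h3.le h5.le

lemma sd_y_close (α : ℝ) (hα : 0 ≤ α) (ε : ℝ) (hε : 0 < ε) :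
    ∃ r ≥ (1:ℝ), ∀ s y : ℝ, r ≤ s → 0 ≤ y →
      |(1 + y) ^ α - y ^ α| ≤ ε * (y ^ α + s ^ α) := by
  rcases hα.eq_or_lt with h | h
  · subst h
    refine ⟨1, le_rfl, fun s y _ _ => ?_⟩
    simp
    positivity
  obtain ⟨R, hR1, hR⟩ := sd_one_add_rpow_close α ε hε
  have h1 := (tendsto_rpow_atTop h).eventually_ge_atTop ((1 + R) ^ α / ε)
  obtain ⟨r, hr⟩ := eventually_atTop.1 h1
  refine ⟨max r 1, le_max_right _ _, fun s y hs hy => ?_⟩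
  have hs1 : 1 ≤ s := (le_max_right _ _).trans hs
  have hs0 : 0 < s := by linarith
  have hsα : 0 < s ^ α := Real.rpow_pos_of_pos hs0 _
  have hyα : 0 ≤ y ^ α := Real.rpow_nonneg hy _
  by_cases hyR : R ≤ y
  · have := hR y hyR
    nlinarith [mul_pos hε hsα]
  · push Not at hyR
    have h2 := hr s ((le_max_left _ _).trans hs)
    rw [div_le_iff₀ hε] at h2
    have h3 : (1 + y) ^ α ≤ (1 + R) ^ α := Real.rpow_le_rpow (by linarith) (by linarith) hα
    have h4 : y ^ α ≤ (1 + y) ^ α := Real.rpow_le_rpow hy (by linarith) hα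
    rw [abs_of_nonneg (by linarith)]
    nlinarith [mul_nonneg hε.le hyα]

/-- asymptotic form of (A_f) -/
lemma sd_f_asymp (f : ℝ → ℝ → ℝ) (ρ α γ : ℝ) (hρ : 0 < ρ) (hα : 0 ≤ α)
    (hA : ∀ ε > (0:ℝ), ∃ r ≥ (0:ℝ), ∀ t y : ℝ, 0 ≤ t → 0 ≤ y → r ≤ t + y →
      |f t y * (1 + t) ^ (-γ) * (1 + y) ^ (-α) - ρ| ≤ ε) (ε : ℝ) (hε : 0 < ε) :
    ∃ r ≥ (1:ℝ), ∀ s y : ℝ, r ≤ s → 0 ≤ y →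
      |f s y - ρ * (s ^ γ * y ^ α)| ≤ ε * (s ^ γ * y ^ α + s ^ (γ + α)) := by
  set e := min 1 (ε / (6 * ρ)) with he
  have he0 : 0 < e := lt_min one_pos (by positivity)
  have he1 : e ≤ 1 := min_le_left _ _
  have he2 : e * ρ ≤ ε / 6 := by
    have : e ≤ ε / (6 * ρ) := min_le_right _ _
    calc e * ρ ≤ ε / (6 * ρ) * ρ := mul_le_mul_of_nonneg_right this hρ.le
      _ = ε / 6 := by field_simp
  obtain ⟨r1, -, hr1⟩ := hA (ε / 8) (by positivity)
  obtain ⟨r2, hr2, hs2⟩ := sd_one_add_rpow_close γ e he0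
  obtain ⟨r3, hr3, hs3⟩ := sd_y_close α hα e he0
  refine ⟨max r1 (max r2 r3), le_max_of_le_right (le_max_of_le_left hr2), fun s y hs hy => ?_⟩
  have hs1 : r1 ≤ s := (le_max_left _ _).trans hs
  have hs2' : r2 ≤ s := ((le_max_left _ _).trans (le_max_right _ _)).trans hs
  have hs3' : r3 ≤ s := ((le_max_right _ _).trans (le_max_right _ _)).trans hs
  have hs0 : 0 < s := by linarith
  have a1 := hr1 s y hs0.le hy (by linarith)
  have a2 := hs2 s hs2'
  have a3 := hs3 s y hs3' hy
  have g0 : 0 < (1 + s) ^ γ := Real.rpow_pos_of_pos (by linarith) _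
  have h0 : 0 < (1 + y) ^ α := Real.rpow_pos_of_pos (by linarith) _
  have p0 : 0 < s ^ γ := Real.rpow_pos_of_pos hs0 _
  have q0 : 0 < s ^ α := Real.rpow_pos_of_pos hs0 _
  have y0 : 0 ≤ y ^ α := Real.rpow_nonneg hy _
  rw [Real.rpow_add hs0]
  rw [Real.rpow_neg (by linarith), Real.rpow_neg (by linarith)] at a1
  generalize (1 + s) ^ γ = g at *
  generalize (1 + y) ^ α = h at *
  generalize s ^ γ = p at *
  generalize s ^ α = q at *
  generalize y ^ α = z at *
  have b1 : |f s y - ρ * (g * h)| ≤ ε / 8 * (g * h) := by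
    have : f s y - ρ * (g * h) = (f s y * g⁻¹ * h⁻¹ - ρ) * (g * h) := by field_simp
    rw [this, abs_mul, abs_of_pos (mul_pos g0 h0)]
    exact mul_le_mul_of_nonneg_right a1 (mul_pos g0 h0).le
  have gle : g ≤ 2 * p := by nlinarith [(abs_le.1 a2).2]
  have b2 : |g * h - p * z| ≤ 3 * e * (p * z + p * q) := by
    have : g * h - p * z = g * (h - z) + (g - p) * z := by ring
    rw [this]
    refine (abs_add_le _ _).trans ?_
    rw [abs_mul, abs_mul, abs_of_pos g0, abs_of_nonneg y0]
    have c1 : g * |h - z| ≤ 2 * p * (e * (z + q)) :=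
      mul_le_mul gle a3 (abs_nonneg _) (by positivity)
    have c2 : |g - p| * z ≤ e * p * z := mul_le_mul_of_nonneg_right a2 y0
    nlinarith [mul_pos (mul_pos he0 p0) q0]
  have b3 : g * h ≤ 4 * (p * z + p * q) := by
    have := (abs_le.1 b2).2
    have hh : e * (p * z + p * q) ≤ 1 * (p * z + p * q) :=
      mul_le_mul_of_nonneg_right he1 (by positivity)
    nlinarith [mul_pos p0 q0]
  have : f s y - ρ * (p * z) = (f s y - ρ * (g * h)) + ρ * (g * h - p * z) := by ring
  rw [this]
  refine (abs_add_le _ _).trans ?_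
  rw [abs_mul, abs_of_pos hρ]
  have d1 : ε / 8 * (g * h) ≤ ε / 8 * (4 * (p * z + p * q)) :=
    mul_le_mul_of_nonneg_left b3 (by positivity)
  have d2 : ρ * |g * h - p * z| ≤ ρ * (3 * e * (p * z + p * q)) :=
    mul_le_mul_of_nonneg_left b2 hρ.le
  have d3 : e * ρ * (p * z + p * q) ≤ ε / 6 * (p * z + p * q) :=
    mul_le_mul_of_nonneg_right he2 (by positivity)
  nlinarith

lemma sd_f_lower (f : ℝ → ℝ → ℝ) (ρ α γ : ℝ) (hρ : 0 < ρ) (hα : 0 ≤ α)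
    (hA : ∀ ε > (0:ℝ), ∃ r ≥ (0:ℝ), ∀ t y : ℝ, 0 ≤ t → 0 ≤ y → r ≤ t + y →
      |f t y * (1 + t) ^ (-γ) * (1 + y) ^ (-α) - ρ| ≤ ε) :
    ∃ r ≥ (1:ℝ), ∀ s y : ℝ, r ≤ s → 0 ≤ y → ρ / 4 * (s ^ γ * y ^ α) ≤ f s y := by
  obtain ⟨r1, -, hr1⟩ := hA (ρ / 2) (by positivity)
  obtain ⟨r2, hr2, hs2⟩ := sd_one_add_rpow_close γ (1/2) (by norm_num)
  refine ⟨max r1 r2, le_max_of_le_right hr2, fun s y hs hy => ?_⟩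
  have hs1 : r1 ≤ s := (le_max_left _ _).trans hs
  have hs2' : r2 ≤ s := (le_max_right _ _).trans hs
  have hs0 : 0 < s := by linarith
  have a1 := hr1 s y hs0.le hy (by linarith)
  have a2 := hs2 s hs2'
  have a4 : y ^ α ≤ (1 + y) ^ α := Real.rpow_le_rpow hy (by linarith) hα
  have g0 : 0 < (1 + s) ^ γ := Real.rpow_pos_of_pos (by linarith) _
  have h0 : 0 < (1 + y) ^ α := Real.rpow_pos_of_pos (by linarith) _
  have p0 : 0 < s ^ γ := Real.rpow_pos_of_pos hs0 _
  have y0 : 0 ≤ y ^ α := Real.rpow_nonneg hy _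
  rw [Real.rpow_neg (by linarith), Real.rpow_neg (by linarith)] at a1
  generalize (1 + s) ^ γ = g at *
  generalize (1 + y) ^ α = h at *
  generalize s ^ γ = p at *
  generalize y ^ α = z at *
  have b1 : ρ / 2 * (g * h) ≤ f s y := by
    have : f s y = (f s y * g⁻¹ * h⁻¹) * (g * h) := by field_simp
    rw [this]
    exact mul_le_mul_of_nonneg_right (by linarith [(abs_le.1 a1).1]) (mul_pos g0 h0).le
  have b2 : p / 2 * z ≤ g * h :=
    mul_le_mul (by linarith [(abs_le.1 a2).1]) a4 y0 g0.le
  nlinarith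

lemma sd_f_upper (f : ℝ → ℝ → ℝ)
    (hf_cont : ContinuousOn (fun p : ℝ × ℝ => f p.1 p.2) (Set.Ici 0 ×ˢ Set.Ici 0))
    (ρ α γ : ℝ) (hρ : 0 < ρ) (hα : 0 ≤ α)
    (hA : ∀ ε > (0:ℝ), ∃ r ≥ (0:ℝ), ∀ t y : ℝ, 0 ≤ t → 0 ≤ y → r ≤ t + y →
      |f t y * (1 + t) ^ (-γ) * (1 + y) ^ (-α) - ρ| ≤ ε) :
    ∃ C : ℝ, 0 < C ∧ (∀ s y : ℝ, 0 ≤ s → s ≤ 1 → 0 ≤ y → f s y ≤ C * (1 + y ^ α)) ∧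
      (∀ s y : ℝ, 1 ≤ s → 0 ≤ y → f s y ≤ C * (s ^ γ * y ^ α + s ^ (γ + α))) := by
  obtain ⟨r1, -, hr1⟩ := hA ρ hρ
  have hK : IsCompact (Set.Icc (0:ℝ) r1 ×ˢ Set.Icc (0:ℝ) r1) := isCompact_Icc.prod isCompact_Icc
  obtain ⟨C0, hC0⟩ := hK.exists_bound_of_continuousOn (f := fun p : ℝ × ℝ =>
      f p.1 p.2 * (1 + p.1) ^ (-γ) * (1 + p.2) ^ (-α)) (by
    refine ((hf_cont.mono ?_).mul ?_).mul ?_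
    · exact Set.prod_mono Icc_subset_Ici_self Icc_subset_Ici_self
    · refine ContinuousOn.rpow_const (by fun_prop) ?_
      rintro ⟨a, b⟩ ⟨h1, h2⟩
      left
      have : 0 ≤ a := h1.1
      simp only
      linarith
    · refine ContinuousOn.rpow_const (by fun_prop) ?_
      rintro ⟨a, b⟩ ⟨h1, h2⟩
      left
      have : 0 ≤ b := h2.1
      simp only
      linarith)
  set C1 := max C0 (2 * ρ) with hC1
  have hC1p : 0 < C1 := lt_max_of_lt_right (by positivity)
  have key : ∀ s y : ℝ, 0 ≤ s → 0 ≤ y → f s y ≤ C1 * ((1 + s) ^ γ * (1 + y) ^ α) := by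
    intro s y hs hy
    have g0 : 0 < (1 + s) ^ γ := Real.rpow_pos_of_pos (by linarith) _
    have h0 : 0 < (1 + y) ^ α := Real.rpow_pos_of_pos (by linarith) _
    have : f s y * (1 + s) ^ (-γ) * (1 + y) ^ (-α) ≤ C1 := by
      by_cases hr : r1 ≤ s + y
      · have := (abs_le.1 (hr1 s y hs hy hr)).2
        exact le_max_of_le_right (by linarith)
      · push Not at hr
        have := hC0 (s, y) ⟨⟨hs, by linarith⟩, ⟨hy, by linarith⟩⟩
        exact le_max_of_le_left ((le_abs_self _).trans this)
    rw [Real.rpow_neg (by linarith), Real.rpow_neg (by linarith)] at this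
    have e : f s y = (f s y * ((1 + s) ^ γ)⁻¹ * ((1 + y) ^ α)⁻¹) * ((1 + s) ^ γ * (1 + y) ^ α) := by
      field_simp
    rw [e]
    exact mul_le_mul_of_nonneg_right this (mul_pos g0 h0).le
  -- (1+y)^α ≤ 2^α (1 + y^α)
  have hy2 : ∀ y : ℝ, 0 ≤ y → (1 + y) ^ α ≤ 2 ^ α * (1 + y ^ α) := by
    intro y hy
    have y0 : 0 ≤ y ^ α := Real.rpow_nonneg hy _
    have t0 : (0:ℝ) < 2 ^ α := by positivity
    rcases le_total y 1 with h | h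
    · have : (1 + y) ^ α ≤ 2 ^ α := Real.rpow_le_rpow (by linarith) (by linarith) hα
      nlinarith
    · have : (1 + y) ^ α ≤ (2 * y) ^ α := Real.rpow_le_rpow (by linarith) (by linarith) hα
      rw [Real.mul_rpow (by norm_num) hy] at this
      nlinarith
  -- (1+s)^γ ≤ 2^|γ| * max
  have hs01 : ∀ s : ℝ, 0 ≤ s → s ≤ 1 → (1 + s) ^ γ ≤ 2 ^ |γ| := by
    intro s hs hs1
    calc (1 + s) ^ γ ≤ (1 + s) ^ |γ| := Real.rpow_le_rpow_of_exponent_le (by linarith) (le_abs_self _)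
      _ ≤ 2 ^ |γ| := Real.rpow_le_rpow (by linarith) (by linarith) (abs_nonneg _)
  have hs1' : ∀ s : ℝ, 1 ≤ s → (1 + s) ^ γ ≤ 2 ^ |γ| * s ^ γ := by
    intro s hs
    have hs0 : 0 < s := by linarith
    have h4 : (1 + s) ^ γ = (1 + s⁻¹) ^ γ * s ^ γ := by
      rw [← Real.mul_rpow (by positivity) hs0.le]
      congr 1
      field_simp
      ring
    rw [h4]
    exact mul_le_mul_of_nonneg_right (hs01 _ (by positivity) (inv_le_one_of_one_le₀ hs))
      (Real.rpow_nonneg hs0.le _)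
  have t1 : (0:ℝ) < 2 ^ |γ| := by positivity
  have t2 : (0:ℝ) < 2 ^ α := by positivity
  refine ⟨C1 * (2 ^ |γ| * 2 ^ α), by positivity, ?_, ?_⟩
  · intro s y hs hs1 hy
    refine (key s y hs hy).trans ?_
    rw [mul_assoc, mul_assoc]
    refine mul_le_mul_of_nonneg_left ?_ hC1p.le
    exact mul_le_mul (hs01 s hs hs1) (hy2 y hy) (Real.rpow_nonneg (by linarith) _) t1.le
  · intro s y hs hy
    have hs0 : 0 < s := by linarith
    refine (key s y hs0.le hy).trans ?_
    rw [mul_assoc]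
    refine mul_le_mul_of_nonneg_left ?_ hC1p.le
    calc (1 + s) ^ γ * (1 + y) ^ α ≤ (2 ^ |γ| * s ^ γ) * (2 ^ α * (1 + y ^ α)) :=
          mul_le_mul (hs1' s hs) (hy2 y hy) (Real.rpow_nonneg (by linarith) _)
            (mul_nonneg t1.le (Real.rpow_nonneg hs0.le _))
      _ = 2 ^ |γ| * 2 ^ α * (s ^ γ * y ^ α + s ^ γ) := by ring
      _ ≤ 2 ^ |γ| * 2 ^ α * (s ^ γ * y ^ α + s ^ (γ + α)) := by
          refine mul_le_mul_of_nonneg_left ?_ (by positivity)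
          gcongr
          linarith

noncomputable def sdA (γ α : ℝ) (y : ℝ → ℝ) (t : ℝ) : ℝ := ∫ s in (1:ℝ)..t, s ^ γ * (y s) ^ α
noncomputable def sdD (f : ℝ → ℝ → ℝ) (y : ℝ → ℝ) (t : ℝ) : ℝ :=
  ∫ s in (0:ℝ)..t, (2 * f s (y s) + 1)

lemma sd_intA (γ α : ℝ) (hα : 0 ≤ α) (y : ℝ → ℝ) (hy : Continuous y) (a b : ℝ) (ha : 1 ≤ a)
    (hb : 1 ≤ b) : IntervalIntegrable (fun s => s ^ γ * (y s) ^ α) volume a b := by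
  refine ContinuousOn.intervalIntegrable ?_
  refine ContinuousOn.mul ?_ ?_
  · refine ContinuousOn.rpow_const continuousOn_id ?_
    intro x hx
    left
    have := (le_min ha hb).trans hx.1
    linarith
  · exact (hy.rpow_const (fun _ => Or.inr hα)).continuousOn

lemma sd_intD (f : ℝ → ℝ → ℝ)
    (hf_cont : ContinuousOn (fun p : ℝ × ℝ => f p.1 p.2) (Set.Ici 0 ×ˢ Set.Ici 0))
    (y : ℝ → ℝ) (hy : Continuous y) (hy0 : ∀ s, 0 ≤ y s) (a b : ℝ) (ha : 0 ≤ a)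
    (hb : 0 ≤ b) : IntervalIntegrable (fun s => 2 * f s (y s) + 1) volume a b := by
  refine ContinuousOn.intervalIntegrable ?_
  have : ContinuousOn (fun s => f s (y s)) (uIcc a b) := by
    refine hf_cont.comp (f := fun s => (s, y s)) (by fun_prop) ?_
    intro x hx
    exact ⟨(le_min ha hb).trans hx.1, hy0 x⟩
  exact (continuousOn_const.mul this).add continuousOn_const

lemma sd_integrandA_nonneg (γ α : ℝ) (y : ℝ → ℝ) (hy0 : ∀ s, 0 ≤ y s) (s : ℝ) (hs : 0 ≤ s) :
    0 ≤ s ^ γ * (y s) ^ α :=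
  mul_nonneg (Real.rpow_nonneg hs _) (Real.rpow_nonneg (hy0 s) _)

lemma sd_A_nonneg (γ α : ℝ) (y : ℝ → ℝ) (hy0 : ∀ s, 0 ≤ y s) (t : ℝ) (ht : 1 ≤ t) :
    0 ≤ sdA γ α y t :=
  intervalIntegral.integral_nonneg ht
    (fun s hs => sd_integrandA_nonneg γ α y hy0 s (by linarith [hs.1]))

lemma sd_A_sub (γ α : ℝ) (hα : 0 ≤ α) (y : ℝ → ℝ) (hy : Continuous y) (a b : ℝ) (ha : 1 ≤ a)
    (hb : 1 ≤ b) : sdA γ α y b - sdA γ α y a = ∫ s in a..b, s ^ γ * (y s) ^ α :=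
  intervalIntegral.integral_interval_sub_left (sd_intA γ α hα y hy 1 b le_rfl hb)
    (sd_intA γ α hα y hy 1 a le_rfl ha)

lemma sd_A_mono (γ α : ℝ) (hα : 0 ≤ α) (y : ℝ → ℝ) (hy : Continuous y) (hy0 : ∀ s, 0 ≤ y s)
    (a b : ℝ) (ha : 1 ≤ a) (hab : a ≤ b) : sdA γ α y a ≤ sdA γ α y b := by
  have := sd_A_sub γ α hα y hy a b ha (ha.trans hab)
  have h2 : 0 ≤ ∫ s in a..b, s ^ γ * (y s) ^ α := intervalIntegral.integral_nonneg hab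
    (fun s hs => sd_integrandA_nonneg γ α y hy0 s (by linarith [hs.1]))
  linarith

lemma sd_D_sub (f : ℝ → ℝ → ℝ)
    (hf_cont : ContinuousOn (fun p : ℝ × ℝ => f p.1 p.2) (Set.Ici 0 ×ˢ Set.Ici 0))
    (y : ℝ → ℝ) (hy : Continuous y) (hy0 : ∀ s, 0 ≤ y s) (a b : ℝ) (ha : 0 ≤ a)
    (hb : 0 ≤ b) : sdD f y b - sdD f y a = ∫ s in a..b, (2 * f s (y s) + 1) :=
  intervalIntegral.integral_interval_sub_left (sd_intD f hf_cont y hy hy0 0 b le_rfl hb)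
    (sd_intD f hf_cont y hy hy0 0 a le_rfl ha)

lemma sd_D_mono (f : ℝ → ℝ → ℝ)
    (hf_cont : ContinuousOn (fun p : ℝ × ℝ => f p.1 p.2) (Set.Ici 0 ×ˢ Set.Ici 0))
    (hf_nonneg : ∀ t y : ℝ, 0 ≤ t → 0 ≤ y → 0 ≤ f t y)
    (y : ℝ → ℝ) (hy : Continuous y) (hy0 : ∀ s, 0 ≤ y s) (a b : ℝ) (ha : 0 ≤ a)
    (hab : a ≤ b) : sdD f y a ≤ sdD f y b := by
  have := sd_D_sub f hf_cont y hy hy0 a b ha (ha.trans hab)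
  have h2 : 0 ≤ ∫ s in a..b, (2 * f s (y s) + 1) := intervalIntegral.integral_nonneg hab
    (fun s hs => by linarith [hf_nonneg s (y s) (ha.trans hs.1) (hy0 s)])
  linarith

lemma sd_D_nonneg (f : ℝ → ℝ → ℝ)
    (hf_nonneg : ∀ t y : ℝ, 0 ≤ t → 0 ≤ y → 0 ≤ f t y)
    (y : ℝ → ℝ) (hy0 : ∀ s, 0 ≤ y s) (b : ℝ) (hb : 0 ≤ b) : 0 ≤ sdD f y b :=
  intervalIntegral.integral_nonneg hb
    (fun s hs => by linarith [hf_nonneg s (y s) hs.1 (hy0 s)])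

lemma sd_D_upper (f : ℝ → ℝ → ℝ)
    (hf_cont : ContinuousOn (fun p : ℝ × ℝ => f p.1 p.2) (Set.Ici 0 ×ˢ Set.Ici 0))
    (ρ α γ : ℝ) (hρ : 0 < ρ) (hα : 0 ≤ α) (hβ : 0 < γ + α)
    (hA : ∀ ε > (0:ℝ), ∃ r ≥ (0:ℝ), ∀ t y : ℝ, 0 ≤ t → 0 ≤ y → r ≤ t + y →
      |f t y * (1 + t) ^ (-γ) * (1 + y) ^ (-α) - ρ| ≤ ε) :
    ∃ C : ℝ, 0 < C ∧ ∀ y : ℝ → ℝ, Continuous y → (∀ s, 0 ≤ y s) → ∀ t, 1 ≤ t →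
      sdD f y t ≤ C * ((∫ s in (0:ℝ)..1, (y s) ^ α) + sdA γ α y t + t ^ (1 + γ + α)) := by
  obtain ⟨C, hC, h1, h2⟩ := sd_f_upper f hf_cont ρ α γ hρ hα hA
  refine ⟨4 * C + 2, by positivity, fun y hy hy0 t ht => ?_⟩
  have ht0 : 0 < t := by linarith
  have iy : IntervalIntegrable (fun s => (y s) ^ α) volume 0 1 :=
    (hy.rpow_const (fun _ => Or.inr hα)).intervalIntegrable _ _
  have e1 : sdD f y 1 ≤ 2 * C * (∫ s in (0:ℝ)..1, (y s) ^ α) + (2 * C + 1) := by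
    have : sdD f y 1 ≤ ∫ s in (0:ℝ)..1, (2 * C * (y s) ^ α + (2 * C + 1)) := by
      refine intervalIntegral.integral_mono_on zero_le_one
        (sd_intD f hf_cont y hy hy0 0 1 le_rfl zero_le_one)
        ((iy.const_mul _).add intervalIntegrable_const) ?_
      intro s hs
      have := h1 s (y s) hs.1 hs.2 (hy0 s)
      linarith
    rw [intervalIntegral.integral_add (iy.const_mul _) intervalIntegrable_const] at this
    simpa using this
  have iA := sd_intA γ α hα y hy 1 t le_rfl ht
  have e2 : ∫ s in (1:ℝ)..t, (2 * f s (y s) + 1) ≤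
      2 * C * sdA γ α y t + (2 * C + 1) * t ^ (1 + γ + α) := by
    have h3 : ∫ s in (1:ℝ)..t, (2 * f s (y s) + 1) ≤
        ∫ s in (1:ℝ)..t, (2 * C * (s ^ γ * (y s) ^ α) + (2 * C + 1) * t ^ (γ + α)) := by
      refine intervalIntegral.integral_mono_on ht
        (sd_intD f hf_cont y hy hy0 1 t zero_le_one ht0.le)
        ((iA.const_mul _).add intervalIntegrable_const) ?_
      intro s hs
      have h4 := h2 s (y s) hs.1 (hy0 s)
      have h5 : s ^ (γ + α) ≤ t ^ (γ + α) :=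
        Real.rpow_le_rpow (by linarith [hs.1]) hs.2 hβ.le
      have h6 : 1 ≤ t ^ (γ + α) := Real.one_le_rpow ht hβ.le
      nlinarith
    rw [intervalIntegral.integral_add (iA.const_mul _) intervalIntegrable_const] at h3
    rw [intervalIntegral.integral_const_mul, intervalIntegral.integral_const] at h3
    refine h3.trans ?_
    have h7 : t ^ (1 + γ + α) = t * t ^ (γ + α) := by
      rw [add_assoc, Real.rpow_add ht0, Real.rpow_one]
    rw [h7, smul_eq_mul]
    have h8 : 0 < t ^ (γ + α) := Real.rpow_pos_of_pos ht0 _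
    have : (t - 1) * ((2 * C + 1) * t ^ (γ + α)) ≤ (2 * C + 1) * (t * t ^ (γ + α)) := by
      nlinarith [mul_pos hC h8]
    unfold sdA
    linarith
  have e3 := sd_D_sub f hf_cont y hy hy0 1 t zero_le_one ht0.le
  have e4 : 1 ≤ t ^ (1 + γ + α) := Real.one_le_rpow ht (by linarith)
  have e5 := sd_A_nonneg γ α y hy0 t ht
  have e6 : 0 ≤ ∫ s in (0:ℝ)..1, (y s) ^ α :=
    intervalIntegral.integral_nonneg zero_le_one (fun s _ => Real.rpow_nonneg (hy0 s) _)
  nlinarith [mul_nonneg hC.le e5, mul_nonneg hC.le e6]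

lemma sd_D_lower (f : ℝ → ℝ → ℝ)
    (hf_cont : ContinuousOn (fun p : ℝ × ℝ => f p.1 p.2) (Set.Ici 0 ×ˢ Set.Ici 0))
    (hf_nonneg : ∀ t y : ℝ, 0 ≤ t → 0 ≤ y → 0 ≤ f t y)
    (ρ α γ : ℝ) (hρ : 0 < ρ) (hα : 0 ≤ α)
    (hA : ∀ ε > (0:ℝ), ∃ r ≥ (0:ℝ), ∀ t y : ℝ, 0 ≤ t → 0 ≤ y → r ≤ t + y →
      |f t y * (1 + t) ^ (-γ) * (1 + y) ^ (-α) - ρ| ≤ ε) :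
    ∃ r ≥ (1:ℝ), ∀ y : ℝ → ℝ, Continuous y → (∀ s, 0 ≤ y s) → ∀ t, r ≤ t →
      ρ / 2 * (sdA γ α y t - sdA γ α y r) ≤ sdD f y t := by
  obtain ⟨r, hr, h⟩ := sd_f_lower f ρ α γ hρ hα hA
  refine ⟨r, hr, fun y hy hy0 t ht => ?_⟩
  have hr0 : 0 ≤ r := by linarith
  have e1 := sd_D_sub f hf_cont y hy hy0 r t hr0 (hr0.trans ht)
  have e2 := sd_D_nonneg f hf_nonneg y hy0 r hr0
  rw [sd_A_sub γ α hα y hy r t hr (hr.trans ht), ← intervalIntegral.integral_const_mul]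
  have : ∫ s in r..t, ρ / 2 * (s ^ γ * (y s) ^ α) ≤ ∫ s in r..t, (2 * f s (y s) + 1) := by
    refine intervalIntegral.integral_mono_on ht
        ((sd_intA γ α hα y hy r t hr (hr.trans ht)).const_mul _)
        (sd_intD f hf_cont y hy hy0 r t hr0 (hr0.trans ht)) ?_
    intro s hs
    have := h s (y s) hs.1 (hy0 s)
    linarith
  linarith

lemma sd_D_asymp (f : ℝ → ℝ → ℝ)
    (hf_cont : ContinuousOn (fun p : ℝ × ℝ => f p.1 p.2) (Set.Ici 0 ×ˢ Set.Ici 0))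
    (ρ α γ : ℝ) (hρ : 0 < ρ) (hα : 0 ≤ α) (hβ : 0 < γ + α)
    (hA : ∀ ε > (0:ℝ), ∃ r ≥ (0:ℝ), ∀ t y : ℝ, 0 ≤ t → 0 ≤ y → r ≤ t + y →
      |f t y * (1 + t) ^ (-γ) * (1 + y) ^ (-α) - ρ| ≤ ε)
    (y : ℝ → ℝ) (hy : Continuous y) (hy0 : ∀ s, 0 ≤ y s) (ε : ℝ) (hε : 0 < ε) :
    ∀ᶠ t in atTop, |sdD f y t - 2 * ρ * sdA γ α y t| ≤ ε * (sdA γ α y t + t ^ (1 + γ + α)) := by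
  obtain ⟨r, hr, h⟩ := sd_f_asymp f ρ α γ hρ hα hA (ε / 8) (by positivity)
  have hr0 : 0 ≤ r := by linarith
  set K := |sdD f y r - 2 * ρ * sdA γ α y r| with hK
  have hK0 : 0 ≤ K := abs_nonneg _
  have hbig := (tendsto_rpow_atTop hβ).eventually_ge_atTop ((K + 1) * (4 / ε))
  filter_upwards [hbig, eventually_ge_atTop r] with t hbt ht
  have ht1 : 1 ≤ t := hr.trans ht
  have ht0 : 0 < t := by linarith
  have iA := sd_intA γ α hα y hy r t hr ht1
  have iD := sd_intD f hf_cont y hy hy0 r t hr0 ht0.le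
  have e1 := sd_D_sub f hf_cont y hy hy0 r t hr0 (hr0.trans ht)
  have e2 := sd_A_sub γ α hα y hy r t hr ht1
  have h7 : t ^ (1 + γ + α) = t * t ^ (γ + α) := by
    rw [add_assoc, Real.rpow_add ht0, Real.rpow_one]
  have h8 : 0 < t ^ (γ + α) := Real.rpow_pos_of_pos ht0 _
  have e3 : |∫ s in r..t, ((2 * f s (y s) + 1) - 2 * ρ * (s ^ γ * (y s) ^ α))| ≤
      ∫ s in r..t, (ε / 4 * (s ^ γ * (y s) ^ α) + (ε / 4 * t ^ (γ + α) + 1)) := by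
    rw [← Real.norm_eq_abs]
    refine intervalIntegral.norm_integral_le_of_norm_le ht ?_
      ((iA.const_mul _).add intervalIntegrable_const)
    refine Eventually.of_forall fun s hs => ?_
    have h4 := h s (y s) hs.1.le (hy0 s)
    have h5 : s ^ (γ + α) ≤ t ^ (γ + α) :=
      Real.rpow_le_rpow (by linarith [hs.1]) hs.2 hβ.le
    rw [Real.norm_eq_abs, show (2 * f s (y s) + 1) - 2 * ρ * (s ^ γ * (y s) ^ α) =
      2 * (f s (y s) - ρ * (s ^ γ * (y s) ^ α)) + 1 by ring]
    refine (abs_add_le _ _).trans ?_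
    rw [abs_mul, abs_one, abs_two]
    nlinarith
  rw [intervalIntegral.integral_sub iD (iA.const_mul _),
    intervalIntegral.integral_add (iA.const_mul _) intervalIntegrable_const,
    intervalIntegral.integral_const_mul, intervalIntegral.integral_const_mul,
    intervalIntegral.integral_const, ← e1, ← e2, smul_eq_mul] at e3
  have e5 := sd_A_nonneg γ α y hy0 r hr
  have e6 : |sdD f y t - 2 * ρ * sdA γ α y t| ≤ K +
      |sdD f y t - sdD f y r - 2 * ρ * (sdA γ α y t - sdA γ α y r)| := by
    rw [hK]
    refine le_trans (le_of_eq ?_) (abs_add_le _ _)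
    congr 1
    ring
  have e7 : (K + 1) * 4 ≤ ε * t ^ (γ + α) := by
    calc (K + 1) * 4 = ε * ((K + 1) * (4 / ε)) := by field_simp
      _ ≤ _ := mul_le_mul_of_nonneg_left hbt hε.le
  have e8 : (t - r) * (ε / 4 * t ^ (γ + α) + 1) ≤ t * (ε / 4 * t ^ (γ + α) + 1) :=
    mul_le_mul_of_nonneg_right (by linarith) (by positivity)
  rw [h7]
  have e9 : (K + 1) * 4 * t ≤ ε * t ^ (γ + α) * t := mul_le_mul_of_nonneg_right e7 ht0.le
  have e10 := sd_A_nonneg γ α y hy0 t ht1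
  nlinarith [mul_nonneg hε.le e5, mul_nonneg hε.le e10, mul_nonneg hK0 (by linarith : 0 ≤ t - 1), mul_pos hε h8]

lemma sd_grid {Ω : Type*} {m : MeasurableSpace Ω} (μ : Measure Ω) [IsProbabilityMeasure μ]
    (ℱ : Filtration ℝ m) (X : ℝ → Ω → ℝ) (t : ℝ) (ht : 0 ≤ t)
    (hX : ∀ s, 0 ≤ s → s ≤ t → μ[X t | ℱ s] =ᵐ[μ] X s)
    (G : Set Ω) (hG : MeasurableSet[ℱ 0] G) (n : ℕ) (l : ℝ) (hl : 0 < l) :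
    μ {ω | ω ∈ G ∧ ∃ k : ℕ, k ≤ n + 1 ∧ l ≤ |X (t * k / (n + 1)) ω|} ≤
      ENNReal.ofReal ((∫ ω in G, |X t ω| ∂μ) / l) := by
  have hXint : Integrable (X t) μ := integrable_condExp.congr (hX t ht le_rfl)
  have hGm : MeasurableSet G := ℱ.le 0 G hG
  let 𝒢 : Filtration ℕ m :=
    ⟨fun k => ℱ (t * k / (n + 1)), fun a b hab => ℱ.mono (by gcongr), fun k => ℱ.le _⟩
  have hmart := martingale_condExp (G.indicator (X t)) 𝒢 μ
  set U : ℕ → Ω → ℝ := fun k => μ[G.indicator (X t) | 𝒢 k] with hU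
  have hsub : Submartingale (U ⊔ -U) 𝒢 μ := hmart.submartingale.sup hmart.neg.submartingale
  have hmax := maximal_ineq (ε := l.toNNReal) hsub
    (fun k ω => abs_nonneg (U k ω)) (n + 1)
  have hUeq : ∀ k : ℕ, k ≤ n + 1 → U k =ᵐ[μ] G.indicator (X (t * k / (n + 1))) := by
    intro k hk
    have hs0 : 0 ≤ t * k / (n + 1) := by positivity
    have hst : t * k / (n + 1) ≤ t := by
      rw [div_le_iff₀ (by positivity)]
      exact mul_le_mul_of_nonneg_left (by exact_mod_cast hk) ht
    have h1 : μ[G.indicator (X t) | 𝒢 k] =ᵐ[μ] G.indicator (μ[X t | 𝒢 k]) :=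
      condExp_indicator hXint (ℱ.mono hs0 G hG)
    refine h1.trans ?_
    filter_upwards [hX _ hs0 hst] with ω hω
    by_cases hωG : ω ∈ G
    · simp only [indicator_of_mem hωG]
      exact hω
    · simp [indicator_of_notMem hωG]
  have hall : ∀ᵐ ω ∂μ, ∀ k : ℕ, k ≤ n + 1 → U k ω = G.indicator (X (t * k / (n + 1))) ω := by
    rw [ae_all_iff]
    intro k
    by_cases hk : k ≤ n + 1
    · filter_upwards [hUeq k hk] with ω hω _ using hω
    · exact Eventually.of_forall fun ω h => absurd h hk
  set E := {ω | ((l.toNNReal : NNReal) : ℝ) ≤ (Finset.range (n + 1 + 1)).sup' Finset.nonempty_range_add_one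
    fun k => (U ⊔ -U) k ω} with hE
  have hle : μ {ω | ω ∈ G ∧ ∃ k : ℕ, k ≤ n + 1 ∧ l ≤ |X (t * k / (n + 1)) ω|} ≤ μ E := by
    refine measure_mono_ae ?_
    filter_upwards [hall] with ω hω
    rintro ⟨hωG, k, hk, hlk⟩
    change (l.toNNReal : ℝ) ≤ _
    rw [Real.coe_toNNReal l hl.le]
    refine hlk.trans ?_
    have : |X (t * k / (n + 1)) ω| = (U ⊔ -U) k ω := by
      have := hω k hk
      rw [indicator_of_mem hωG] at this
      rw [← this]
      rfl
    rw [this]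
    exact Finset.le_sup' (fun k => (U ⊔ -U) k ω) (Finset.mem_range.2 (by omega))
  have hiQ : ∫ ω in E, (U ⊔ -U) (n + 1) ω ∂μ ≤ ∫ ω in G, |X t ω| ∂μ := by
    calc ∫ ω in E, (U ⊔ -U) (n + 1) ω ∂μ ≤ ∫ ω, (U ⊔ -U) (n + 1) ω ∂μ := by
          refine setIntegral_le_integral (hsub.integrable _) (Eventually.of_forall fun ω => ?_)
          exact abs_nonneg (U (n + 1) ω)
      _ = ∫ ω, G.indicator (fun ω => |X t ω|) ω ∂μ := by
          refine integral_congr_ae ?_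
          filter_upwards [hall] with ω hω
          have h1 := hω (n + 1) le_rfl
          have h2 : t * ((n + 1 : ℕ) : ℝ) / (n + 1) = t := by
            push_cast
            field_simp
          rw [h2] at h1
          change |U (n + 1) ω| = _
          rw [h1]
          by_cases hωG : ω ∈ G <;> simp [hωG]
      _ = _ := integral_indicator hGm
  refine hle.trans ?_
  rw [ENNReal.ofReal_div_of_pos hl, ENNReal.le_div_iff_mul_le (Or.inl (by simpa using hl))
    (Or.inl ENNReal.ofReal_ne_top), mul_comm]
  exact hmax.trans (ENNReal.ofReal_le_ofReal hiQ)

lemma sd_maximal {Ω : Type*} {m : MeasurableSpace Ω} (μ : Measure Ω) [IsProbabilityMeasure μ]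
    (ℱ : Filtration ℝ m) (M : ℝ → Ω → ℝ)
    (hMc : ∀ ω, ContinuousOn (fun t => M t ω) (Ici 0))
    (τ : ℕ → Ω → ℝ)
    (hτ_tend : ∀ ω, Tendsto (fun N => τ N ω) atTop atTop)
    (hM_int : ∀ (N : ℕ) (t : ℝ), 0 ≤ t → Integrable (fun ω => (M (min t (τ N ω)) ω) ^ 2) μ)
    (hM_loc : ∀ (N : ℕ) (s t : ℝ), 0 ≤ s → s ≤ t →
      (μ[(fun ω => M (min t (τ N ω)) ω) | ℱ s]) =ᵐ[μ] fun ω => M (min s (τ N ω)) ω)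
    (G : Set Ω) (hG : MeasurableSet[ℱ 0] G) (t : ℝ) (ht : 0 < t) (c : ℝ) (hc : 0 < c)
    (hV : ∀ N, ∫ ω in G, (M (min t (τ N ω)) ω) ^ 2 ∂μ ≤ c ^ 2) (l : ℝ) (hl : 0 < l) :
    μ {ω | ω ∈ G ∧ ∃ s ∈ Icc 0 t, l < |M s ω|} ≤ ENNReal.ofReal (c / l) := by
  let E : ℕ → Set Ω := fun n =>
    {ω | ω ∈ G ∧ ∃ k : ℕ, k ≤ n + 1 ∧ l ≤ |M (min (t * k / (n + 1)) (τ n ω)) ω|}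
  have hE : ∀ n, μ (E n) ≤ ENNReal.ofReal (c / l) := by
    intro n
    refine (sd_grid μ ℱ (fun s ω => M (min s (τ n ω)) ω) t ht.le
      (fun s hs hst => hM_loc n s t hs hst) G hG n l hl).trans ?_
    refine ENNReal.ofReal_le_ofReal ?_
    refine div_le_div_of_nonneg_right ?_ hl.le
    have hi : Integrable (fun ω => M (min t (τ n ω)) ω) μ :=
      integrable_condExp.congr (hM_loc n t t ht.le le_rfl)
    have hi2 := hM_int n t ht.le
    calc ∫ ω in G, |M (min t (τ n ω)) ω| ∂μ
        ≤ ∫ ω in G, ((2 * c)⁻¹ * (M (min t (τ n ω)) ω) ^ 2 + c / 2) ∂μ := by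
          refine integral_mono hi.abs.integrableOn
            ((hi2.const_mul _).add (integrable_const _)).integrableOn ?_
          intro ω
          simp only
          generalize M (min t (τ n ω)) ω = x
          have : (2 * c)⁻¹ * x ^ 2 + c / 2 - |x| = (2 * c)⁻¹ * (|x| - c) ^ 2 := by
            field_simp
            nlinarith [sq_abs x]
          have h2 : 0 ≤ (2 * c)⁻¹ * (|x| - c) ^ 2 := by positivity
          linarith
      _ = (2 * c)⁻¹ * ∫ ω in G, (M (min t (τ n ω)) ω) ^ 2 ∂μ + μ.real G * (c / 2) := by
          rw [integral_add (hi2.const_mul _).integrableOn (integrable_const _),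
            integral_const_mul, setIntegral_const, smul_eq_mul]
      _ ≤ (2 * c)⁻¹ * c ^ 2 + 1 * (c / 2) := by
          have := hV n
          have h1 : μ.real G ≤ 1 := measureReal_le_one
          gcongr
      _ = c := by field_simp; norm_num
  have hsub : {ω | ω ∈ G ∧ ∃ s ∈ Icc 0 t, l < |M s ω|} ⊆ ⋃ n, ⋂ k ≥ n, E k := by
    rintro ω ⟨hωG, s, hs, hls⟩
    simp only [mem_iUnion, mem_iInter]
    suffices h : ∀ᶠ k in atTop, ω ∈ E k by
      obtain ⟨n, hn⟩ := eventually_atTop.1 h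
      exact ⟨n, hn⟩
    -- the grid approximation of s
    let u : ℕ → ℝ := fun n => t * (⌊s / t * (n + 1)⌋₊ : ℝ) / (n + 1)
    have hst : 0 ≤ s / t := div_nonneg hs.1 ht.le
    have hu : Tendsto u atTop (nhds s) := by
      have h1 := (tendsto_natCast_atTop_atTop (R := ℝ)).atTop_add (tendsto_const_nhds (x := (1:ℝ)))
      have h2 := (tendsto_nat_floor_mul_div_atTop hst).comp h1
      have h3 := h2.const_mul t
      have e : t * (s / t) = s := by field_simp
      rw [e] at h3
      refine h3.congr fun n => ?_
      simp only [u, Function.comp]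
      ring
    have hu0 : ∀ n, u n ∈ Ici (0:ℝ) := fun n => by
      simp only [u, mem_Ici]
      positivity
    have hu' : Tendsto u atTop (nhdsWithin s (Ici 0)) :=
      tendsto_nhdsWithin_iff.2 ⟨hu, Eventually.of_forall hu0⟩
    have hcomp := ((hMc ω s hs.1).tendsto.comp hu').abs
    have hev := hcomp.eventually (lt_mem_nhds hls)
    filter_upwards [hev, (hτ_tend ω).eventually_ge_atTop t] with n hn hτn
    refine ⟨hωG, ⌊s / t * (n + 1)⌋₊, ?_, ?_⟩
    · have : s / t * (n + 1) ≤ ((n + 1 : ℕ) : ℝ) := by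
        push_cast
        have : s / t ≤ 1 := (div_le_one ht).2 hs.2
        nlinarith
      exact Nat.floor_le_of_le this
    · have hle : u n ≤ t := by
        have h1 : (⌊s / t * (n + 1)⌋₊ : ℝ) ≤ s / t * (n + 1) := Nat.floor_le (by positivity)
        have h2 : s / t ≤ 1 := (div_le_one ht).2 hs.2
        simp only [u]
        rw [div_le_iff₀ (by positivity)]
        refine mul_le_mul_of_nonneg_left ?_ ht.le
        nlinarith
      have : min (u n) (τ n ω) = u n := min_eq_left (hle.trans hτn)
      change l ≤ |M (min (u n) (τ n ω)) ω|
      rw [this]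
      exact hn.le
  refine (measure_mono hsub).trans ?_
  rw [Monotone.measure_iUnion]
  · refine iSup_le fun n => (measure_mono ?_).trans (hE n)
    exact biInter_subset_of_mem (mem_Ici.2 le_rfl)
  · intro a b hab
    exact biInter_subset_biInter_left (fun k hk => le_trans hab hk)

lemma sd_meas_param {Ω : Type*} {m : MeasurableSpace Ω} (H : ℝ → Ω → ℝ)
    (hH : Measurable (Function.uncurry H)) (a b : ℝ) :
    Measurable fun ω => ∫ s in a..b, H s ω := by
  unfold intervalIntegral
  have h : ∀ T : Set ℝ, Measurable fun ω => ∫ s in T, H s ω := fun T =>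
    (StronglyMeasurable.integral_prod_left (μ := volume.restrict T)
      hH.stronglyMeasurable).measurable
  exact (h _).sub (h _)

lemma sd_second_moment {Ω : Type*} {m : MeasurableSpace Ω} (μ : Measure Ω) [IsProbabilityMeasure μ]
    (ℱ : Filtration ℝ m) (M S D : ℝ → Ω → ℝ)
    (hSDM : ∀ t ω, S t ω = S 0 ω + D t ω + M t ω)
    (hS0 : ∀ t ω, 0 ≤ S t ω) (hSc : ∀ ω, Continuous fun t => S t ω)
    (hSm : ∀ t, Measurable (S t))
    (hDm : ∀ t, 0 ≤ t → Measurable (D t)) (hDz : ∀ ω, D 0 ω = 0)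
    (hDmono : ∀ ω s t, 0 ≤ s → s ≤ t → D s ω ≤ D t ω)
    (hDint : ∀ t, 0 ≤ t → Integrable (D t) μ)
    (τ : ℕ → Ω → ℝ)
    (hτ_nonneg : ∀ N ω, 0 ≤ τ N ω)
    (hτ_tend : ∀ ω, Tendsto (fun N => τ N ω) atTop atTop)
    (hM_int : ∀ (N : ℕ) (t : ℝ), 0 ≤ t → Integrable (fun ω => (M (min t (τ N ω)) ω) ^ 2) μ)
    (hM_loc : ∀ (N : ℕ) (s t : ℝ), 0 ≤ s → s ≤ t →
      (μ[(fun ω => M (min t (τ N ω)) ω) | ℱ s]) =ᵐ[μ] fun ω => M (min s (τ N ω)) ω)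
    (hM_qv : ∀ (N : ℕ) (s t : ℝ), 0 ≤ s → s ≤ t →
      (μ[(fun ω => (M (min t (τ N ω)) ω) ^ 2
          - 4 * ∫ u in (0:ℝ)..(min t (τ N ω)), S u ω) | ℱ s])
        =ᵐ[μ] fun ω => (M (min s (τ N ω)) ω) ^ 2
          - 4 * ∫ u in (0:ℝ)..(min s (τ N ω)), S u ω)
    (G : Set Ω) (hG : MeasurableSet[ℱ 0] G) (K : ℝ) (hK : 0 ≤ K) (hGK : ∀ ω ∈ G, S 0 ω ≤ K)
    (t : ℝ) (ht : 0 ≤ t) (N : ℕ) :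
    ∫ ω in G, (M (min t (τ N ω)) ω) ^ 2 ∂μ ≤ 4 * (t * (K + ∫ ω, D t ω ∂μ)) := by
  have hGm : MeasurableSet G := ℱ.le 0 G hG
  have hMz : ∀ ω, M 0 ω = 0 := fun ω => by
    have := hSDM 0 ω
    rw [hDz] at this
    linarith
  have hDnn : ∀ ω s, 0 ≤ s → 0 ≤ D s ω := fun ω s hs => by
    have := hDmono ω 0 s le_rfl hs
    rwa [hDz] at this
  have hB0 : 0 ≤ K + ∫ ω, D t ω ∂μ := add_nonneg hK (integral_nonneg fun ω => hDnn ω t ht)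
  have hmi : ∀ N s, 0 ≤ s → Integrable (fun ω => M (min s (τ N ω)) ω) μ := fun N s hs =>
    integrable_condExp.congr (hM_loc N s s hs le_rfl)
  -- zero mean on G
  have hzero : ∀ N s, 0 ≤ s → ∫ ω in G, M (min s (τ N ω)) ω ∂μ = 0 := by
    intro N s hs
    rw [← setIntegral_condExp (ℱ.le 0) (hmi N s hs) hG]
    rw [setIntegral_congr_ae (g := fun _ => (0:ℝ)) hGm]
    · simp
    · filter_upwards [hM_loc N 0 s le_rfl hs] with ω hω _
      rw [hω, min_eq_left (hτ_nonneg N ω), hMz]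
  -- first moment
  have hfirst : ∀ s, 0 ≤ s → s ≤ t →
      ∫⁻ ω in G, ENNReal.ofReal (S s ω) ∂μ ≤ ENNReal.ofReal (K + ∫ ω, D t ω ∂μ) := by
    intro s hs hst
    have hS0int : IntegrableOn (S 0) G μ := by
      refine Measure.integrableOn_of_bounded (M := K) (measure_ne_top μ G)
        (hSm 0).aestronglyMeasurable ?_
      filter_upwards [ae_restrict_mem hGm] with ω hω
      rw [Real.norm_of_nonneg (hS0 0 ω)]
      exact hGK ω hω
    have hle : ∀ N, ∫⁻ ω in G, ENNReal.ofReal (S 0 ω + D s ω + M (min s (τ N ω)) ω) ∂μ ≤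
        ENNReal.ofReal (K + ∫ ω, D t ω ∂μ) := by
      intro N
      have hi : IntegrableOn (fun ω => S 0 ω + D s ω + M (min s (τ N ω)) ω) G μ := (hS0int.add (hDint s hs).integrableOn).add (hmi N s hs).integrableOn
      rw [← ofReal_integral_eq_lintegral_ofReal hi]
      · refine ENNReal.ofReal_le_ofReal ?_
        rw [integral_add (f := fun ω => S 0 ω + D s ω) (hS0int.add (hDint s hs).integrableOn) (hmi N s hs).integrableOn,
          integral_add hS0int (hDint s hs).integrableOn, hzero N s hs, add_zero]
        refine add_le_add ?_ ?_
        · calc ∫ ω in G, S 0 ω ∂μ ≤ ∫ ω in G, K ∂μ :=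
                setIntegral_mono_on hS0int (integrable_const _) hGm hGK
            _ = μ.real G * K := by rw [setIntegral_const, smul_eq_mul]
            _ ≤ 1 * K := mul_le_mul_of_nonneg_right measureReal_le_one hK
            _ = K := one_mul _
        · calc ∫ ω in G, D s ω ∂μ ≤ ∫ ω, D s ω ∂μ :=
                setIntegral_le_integral (hDint s hs) (Eventually.of_forall fun ω => hDnn ω s hs)
            _ ≤ _ := integral_mono (hDint s hs) (hDint t ht) (fun ω => hDmono ω s t hs hst)
      · refine Eventually.of_forall fun ω => ?_
        change 0 ≤ S 0 ω + D s ω + M (min s (τ N ω)) ω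
        have h1 := hSDM (min s (τ N ω)) ω
        have h2 := hS0 (min s (τ N ω)) ω
        have h3 := hDmono ω (min s (τ N ω)) s (le_min hs (hτ_nonneg N ω)) (min_le_left _ _)
        linarith
    calc ∫⁻ ω in G, ENNReal.ofReal (S s ω) ∂μ
        = ∫⁻ ω in G, liminf (fun N : ℕ =>
            ENNReal.ofReal (S 0 ω + D s ω + M (min s (τ N ω)) ω)) atTop ∂μ := by
          refine lintegral_congr fun ω => ?_
          refine (Tendsto.liminf_eq ?_).symm
          refine tendsto_const_nhds.congr' ?_
          filter_upwards [(hτ_tend ω).eventually_ge_atTop s] with N hN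
          rw [min_eq_left hN, ← hSDM]
      _ ≤ liminf (fun N : ℕ => ∫⁻ ω in G,
            ENNReal.ofReal (S 0 ω + D s ω + M (min s (τ N ω)) ω) ∂μ) atTop := by
          refine lintegral_liminf_le' fun N => ?_
          exact (((hSm 0).add (hDm s hs)).aemeasurable.add
            (hmi N s hs).aemeasurable.restrict).ennreal_ofReal
      _ ≤ _ := by
          refine liminf_le_of_le (by isBoundedDefault) ?_
          intro b hb
          obtain ⟨N, hN⟩ := hb.exists
          exact hN.trans (hle N)
  -- second moment
  have hφ := (integrable_condExp (μ := μ) (m := ℱ t)).congr (hM_qv N t t ht le_rfl)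
  have hsq := hM_int N t ht
  have hQint : Integrable (fun ω => ∫ u in (0:ℝ)..(min t (τ N ω)), S u ω) μ := by
    have := (hsq.sub hφ).const_mul (4⁻¹)
    refine this.congr (Eventually.of_forall fun ω => ?_)
    simp only [Pi.sub_apply]
    ring
  have hφz : ∫ ω in G, ((M (min t (τ N ω)) ω) ^ 2
          - 4 * ∫ u in (0:ℝ)..(min t (τ N ω)), S u ω) ∂μ = 0 := by
    rw [← setIntegral_condExp (ℱ.le 0) hφ hG]
    rw [setIntegral_congr_ae (g := fun _ => (0:ℝ)) hGm]
    · simp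
    · filter_upwards [hM_qv N 0 t le_rfl ht] with ω hω _
      rw [hω, min_eq_left (hτ_nonneg N ω), hMz]
      simp
  rw [integral_sub hsq.integrableOn (hQint.const_mul 4).integrableOn, integral_const_mul] at hφz
  have hQ : ∫ ω in G, (∫ u in (0:ℝ)..(min t (τ N ω)), S u ω) ∂μ ≤
      t * (K + ∫ ω, D t ω ∂μ) := by
    have hbn : 0 ≤ t * (K + ∫ ω, D t ω ∂μ) := mul_nonneg ht hB0
    rw [← ENNReal.ofReal_le_ofReal_iff hbn, ofReal_integral_eq_lintegral_ofReal hQint.integrableOn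
      (Eventually.of_forall fun ω => intervalIntegral.integral_nonneg (le_min ht (hτ_nonneg N ω))
        fun u _ => hS0 u ω)]
    have hSu : Measurable (Function.uncurry S) :=
      measurable_uncurry_of_continuous_of_measurable hSc hSm
    calc ∫⁻ ω in G, ENNReal.ofReal (∫ u in (0:ℝ)..(min t (τ N ω)), S u ω) ∂μ
        ≤ ∫⁻ ω in G, (∫⁻ u in Ioc 0 t, ENNReal.ofReal (S u ω)) ∂μ := by
          refine lintegral_mono fun ω => ?_
          have hci : IntegrableOn (fun u => S u ω) (Ioc 0 t) :=
            ((hSc ω).intervalIntegrable 0 t).1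
          change ENNReal.ofReal (∫ u in (0:ℝ)..(min t (τ N ω)), S u ω) ≤ _
          rw [← ofReal_integral_eq_lintegral_ofReal hci (Eventually.of_forall fun u => hS0 u ω)]
          refine ENNReal.ofReal_le_ofReal ?_
          rw [← intervalIntegral.integral_of_le ht]
          exact intervalIntegral.integral_mono_interval le_rfl (le_min ht (hτ_nonneg N ω))
            (min_le_left _ _) (Eventually.of_forall fun u => hS0 u ω)
            ((hSc ω).intervalIntegrable 0 t)
      _ = ∫⁻ u in Ioc 0 t, (∫⁻ ω in G, ENNReal.ofReal (S u ω) ∂μ) := by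
          refine lintegral_lintegral_swap ?_
          exact ((hSu.comp measurable_swap).ennreal_ofReal).aemeasurable
      _ ≤ ∫⁻ u in Ioc 0 t, ENNReal.ofReal (K + ∫ ω, D t ω ∂μ) := by
          refine setLIntegral_mono' measurableSet_Ioc fun u hu => hfirst u hu.1.le hu.2
      _ = ENNReal.ofReal (t * (K + ∫ ω, D t ω ∂μ)) := by
          rw [setLIntegral_const, Real.volume_Ioc, sub_zero, mul_comm, ENNReal.ofReal_mul ht]
  linarith

lemma sd_ev (C a b c : ℝ) (hab : a < b) (hc : 0 < c) : ∀ᶠ t : ℝ in atTop, C * t ^ a ≤ c * t ^ b := by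
  have h := (tendsto_rpow_atTop (sub_pos.2 hab)).eventually_ge_atTop (C / c)
  filter_upwards [h, eventually_gt_atTop 0] with t ht ht0
  rw [Real.rpow_sub ht0, div_le_div_iff₀ hc (Real.rpow_pos_of_pos ht0 _)] at ht
  linarith

lemma sd_borel {Ω : Type*} {m : MeasurableSpace Ω} (μ : Measure Ω) [IsProbabilityMeasure μ]
    (M : ℝ → Ω → ℝ) (G : Set Ω) (c q p : ℝ) (hqp : q < p) (hp : 0 ≤ p) (hc : 0 ≤ c)
    (hmax : ∀ t, 1 ≤ t → ∀ l, 0 < l →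
      μ {ω | ω ∈ G ∧ ∃ s ∈ Icc 0 t, l < |M s ω|} ≤ ENNReal.ofReal (c * t ^ q / l)) :
    ∀ᵐ ω ∂μ, ω ∈ G → ∀ᶠ t in atTop, |M t ω| ≤ 2 ^ p * t ^ p := by
  let E : ℕ → Set Ω := fun n => {ω | ω ∈ G ∧ ∃ s ∈ Icc 0 ((2:ℝ) ^ n), ((2:ℝ) ^ n) ^ p < |M s ω|}
  have hE : ∀ n, μ (E n) ≤ ENNReal.ofReal (c * ((2:ℝ) ^ (q - p)) ^ n) := by
    intro n
    have h2 : (0:ℝ) < 2 ^ n := by positivity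
    refine (hmax (2 ^ n) (one_le_pow₀ (by norm_num)) _ (Real.rpow_pos_of_pos h2 _)).trans ?_
    refine ENNReal.ofReal_le_ofReal (le_of_eq ?_)
    rw [mul_div_assoc, ← Real.rpow_sub h2]
    congr 1
    rw [← Real.rpow_natCast, ← Real.rpow_mul (by norm_num), ← Real.rpow_natCast,
      ← Real.rpow_mul (by norm_num), mul_comm]
  have hr : (2:ℝ) ^ (q - p) < 1 := Real.rpow_lt_one_of_one_lt_of_neg (by norm_num) (by linarith)
  have hr0 : (0:ℝ) < 2 ^ (q - p) := by positivity
  have hsum : (∑' n, μ (E n)) ≠ ⊤ := by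
    refine ne_top_of_le_ne_top ?_ (ENNReal.tsum_le_tsum hE)
    have hs : Summable fun n : ℕ => c * ((2:ℝ) ^ (q - p)) ^ n :=
      (summable_geometric_of_lt_one hr0.le hr).mul_left c
    rw [← ENNReal.ofReal_tsum_of_nonneg (fun n => by positivity) hs]
    exact ENNReal.ofReal_ne_top
  filter_upwards [ae_eventually_notMem hsum] with ω hω hωG
  obtain ⟨n0, hn0⟩ := eventually_atTop.1 hω
  filter_upwards [eventually_ge_atTop ((2:ℝ) ^ n0)] with t ht
  have ht1 : 1 ≤ t := le_trans (one_le_pow₀ (by norm_num)) ht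
  have ht0 : 0 ≤ t := by linarith
  obtain ⟨n, hn1, hn2⟩ := exists_nat_pow_near ht1 (by norm_num : (1:ℝ) < 2)
  have hnn : n0 ≤ n + 1 := by
    have h1 : (2:ℝ) ^ n0 < 2 ^ (n + 1) := lt_of_le_of_lt ht hn2
    exact ((pow_lt_pow_iff_right₀ (by norm_num : (1:ℝ) < 2)).1 h1).le
  have h3 := hn0 (n + 1) hnn
  have h4 : |M t ω| ≤ ((2:ℝ) ^ (n + 1)) ^ p := by
    by_contra hcon
    push Not at hcon
    exact h3 ⟨hωG, t, ⟨ht0, hn2.le⟩, hcon⟩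
  refine h4.trans ?_
  rw [← Real.mul_rpow (by norm_num) ht0]
  refine Real.rpow_le_rpow (by positivity) ?_ hp
  rw [pow_succ]
  linarith

/-- deterministic conclusion for part 1 -/
lemma sd_path_log (Sf Df Af Mf : ℝ → ℝ) (p δ C c ρ r : ℝ) (hδ : 0 < δ) (hδp : δ < p)
    (hρ : 0 < ρ)
    (hS : ∀ t, Sf t = Sf 0 + Df t + Mf t) (hS0 : ∀ t, 0 ≤ Sf t)
    (hM : ∀ᶠ t in atTop, |Mf t| ≤ C * t ^ (p - δ))
    (hD1 : ∀ᶠ t in atTop, ρ / 2 * (Af t - Af r) ≤ Df t)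
    (hD2 : ∀ᶠ t in atTop, Df t ≤ c * (Af t + t ^ p)) (hc : 0 ≤ c)
    (hA1 : ∀ n : ℕ, ∃ C', ∀ᶠ t in atTop, Af t ≤ C' * t ^ (p + 1 / ((n:ℝ) + 1)))
    (hA2 : ∀ n : ℕ, ∀ᶠ t in atTop, t ^ (p - 1 / ((n:ℝ) + 1)) ≤ Af t) :
    Tendsto (fun t => Real.log (Real.sqrt (Sf t)) / Real.log t) atTop (nhds (p / 2)) := by
  have lower : ∀ ε, 0 < ε → ∀ᶠ t in atTop, t ^ (p - ε) ≤ Sf t := by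
    intro ε hε
    obtain ⟨n, hn⟩ := exists_nat_one_div_lt (lt_min hε hδ)
    set e := 1 / ((n:ℝ) + 1) with he
    have he1 : e < ε := hn.trans_le (min_le_left _ _)
    have he2 : e < δ := hn.trans_le (min_le_right _ _)
    filter_upwards [hM, hD1, hA2 n, sd_ev C (p - δ) (p - e) (ρ / 8) (by linarith) (by positivity),
      sd_ev (ρ / 2 * Af r) 0 (p - e) (ρ / 8) (by linarith) (by positivity),
      sd_ev 1 (p - ε) (p - e) (ρ / 4) (by linarith) (by positivity)] with t h1 h2 h3 h4 h5 h6
    rw [Real.rpow_zero] at h5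
    rw [hS t]
    have h7 := hS0 0
    have h8 := (abs_le.1 h1).1
    nlinarith
  have upper : ∀ ε, 0 < ε → ∀ᶠ t in atTop, Sf t ≤ t ^ (p + ε) := by
    intro ε hε
    obtain ⟨n, hn⟩ := exists_nat_one_div_lt hε
    set e := 1 / ((n:ℝ) + 1) with he
    obtain ⟨C', hC'⟩ := hA1 n
    filter_upwards [hM, hD2, hC', sd_ev C (p - δ) (p + ε) (1 / 4) (by linarith) (by positivity),
      sd_ev (Sf 0) 0 (p + ε) (1 / 4) (by linarith) (by positivity),
      sd_ev (c * C') (p + e) (p + ε) (1 / 4) (by linarith) (by positivity),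
      sd_ev c p (p + ε) (1 / 4) (by linarith) (by positivity)] with t h1 h2 h3 h4 h5 h6 h7
    rw [Real.rpow_zero] at h5
    rw [hS t]
    have h8 := (abs_le.1 h1).2
    have h9 := mul_le_mul_of_nonneg_left h3 hc
    nlinarith
  rw [Metric.tendsto_nhds]
  intro ε hε
  filter_upwards [lower ε hε, upper ε hε, eventually_gt_atTop 1] with t h1 h2 ht
  have ht0 : 0 < t := by linarith
  have hl : 0 < Real.log t := Real.log_pos ht
  have hSp : 0 < Sf t := (Real.rpow_pos_of_pos ht0 _).trans_le h1
  have g1 := Real.log_le_log (Real.rpow_pos_of_pos ht0 _) h1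
  have g2 := Real.log_le_log hSp h2
  rw [Real.log_rpow ht0] at g1 g2
  rw [Real.log_sqrt hSp.le, Real.dist_eq]
  have : |Real.log (Sf t) / 2 / Real.log t - p / 2| ≤ ε / 2 := by
    rw [abs_le]
    constructor
    · have : p / 2 - ε / 2 ≤ Real.log (Sf t) / 2 / Real.log t := by
        rw [le_div_iff₀ hl]
        linarith
      linarith
    · have : Real.log (Sf t) / 2 / Real.log t ≤ p / 2 + ε / 2 := by
        rw [div_le_iff₀ hl]
        linarith
      linarith
  linarith

lemma sd_D_expect {Ω : Type*} {m : MeasurableSpace Ω} (μ : Measure Ω) [IsProbabilityMeasure μ]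
    (f : ℝ → ℝ → ℝ)
    (hf_cont : ContinuousOn (fun p : ℝ × ℝ => f p.1 p.2) (Set.Ici 0 ×ˢ Set.Ici 0))
    (hf_nonneg : ∀ t y : ℝ, 0 ≤ t → 0 ≤ y → 0 ≤ f t y)
    (ρ α γ : ℝ) (hρ : 0 < ρ) (hα : 0 ≤ α) (hβ : 0 < γ + α)
    (hA : ∀ ε > (0:ℝ), ∃ r ≥ (0:ℝ), ∀ t y : ℝ, 0 ≤ t → 0 ≤ y → r ≤ t + y →
      |f t y * (1 + t) ^ (-γ) * (1 + y) ^ (-α) - ρ| ≤ ε)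
    (Y : ℝ → Ω → ℝ)
    (hY_nonneg : ∀ t ω, 0 ≤ Y t ω) (hY_cont : ∀ ω, Continuous fun t => Y t ω)
    (hYm : ∀ t, Measurable (Y t))
    (hYa : ∀ t ∈ Set.Icc (0:ℝ) 1, Integrable (fun ω => (Y t ω) ^ α) μ)
    (hYa' : IntervalIntegrable (fun t => ∫ ω, (Y t ω) ^ α ∂μ) MeasureTheory.volume 0 1)
    (CA : ℝ) (hYd : ∀ t : ℝ, 1 ≤ t →
      Integrable (fun ω => sdA γ α (fun s => Y s ω) t) μ ∧
      ∫ ω, sdA γ α (fun s => Y s ω) t ∂μ ≤ CA * t ^ (1 + γ + α)) :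
    (∀ t, 0 ≤ t → Measurable fun ω => sdD f (fun s => Y s ω) t) ∧
    (∀ t, 0 ≤ t → Integrable (fun ω => sdD f (fun s => Y s ω) t) μ) ∧
    ∃ C : ℝ, 0 < C ∧ ∀ t, 1 ≤ t → ∫ ω, sdD f (fun s => Y s ω) t ∂μ ≤ C * t ^ (1 + γ + α) := by
  have hYu : Measurable (Function.uncurry Y) :=
    measurable_uncurry_of_continuous_of_measurable hY_cont hYm
  have hmeas : ∀ t, 0 ≤ t → Measurable fun ω => sdD f (fun s => Y s ω) t := by
    intro t ht
    have hF : Continuous fun p : ℝ × ℝ => f (max p.1 0) (max p.2 0) := by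
      have : ContinuousOn (fun p : ℝ × ℝ => f (max p.1 0) (max p.2 0)) univ :=
        hf_cont.comp (f := fun p : ℝ × ℝ => (max p.1 0, max p.2 0)) (by fun_prop)
          (fun p _ => mem_prod.2 ⟨mem_Ici.2 (le_max_right _ _), mem_Ici.2 (le_max_right _ _)⟩)
      exact continuousOn_univ.1 this
    have h1 : Measurable (Function.uncurry fun (s : ℝ) (ω : Ω) =>
        2 * f (max s 0) (max (Y s ω) 0) + 1) := by
      have h2 : Measurable fun q : ℝ × Ω => f (max q.1 0) (max (Function.uncurry Y q) 0) :=
        hF.measurable.comp (measurable_fst.prodMk hYu)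
      exact (h2.const_mul 2).add_const 1
    have e : (fun ω => sdD f (fun s => Y s ω) t) =
        fun ω => ∫ s in (0:ℝ)..t, (2 * f (max s 0) (max (Y s ω) 0) + 1) := by
      funext ω
      refine intervalIntegral.integral_congr fun s hs => ?_
      rw [uIcc_of_le ht] at hs
      simp only [max_eq_left hs.1, max_eq_left (hY_nonneg s ω)]
    rw [e]
    exact sd_meas_param _ h1 0 t
  have hJ : Integrable (fun ω => ∫ s in (0:ℝ)..1, (Y s ω) ^ α) μ := by
    have hiQ : Integrable (fun q : ℝ × Ω => (Y q.1 q.2) ^ α)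
        ((volume.restrict (Ioc (0:ℝ) 1)).prod μ) := by
      have hm : Measurable (fun q : ℝ × Ω => (Y q.1 q.2) ^ α) := hYu.pow_const α
      rw [integrable_prod_iff hm.aestronglyMeasurable]
      constructor
      · filter_upwards [ae_restrict_mem measurableSet_Ioc] with s hs
        exact hYa s ⟨hs.1.le, hs.2⟩
      · have := hYa'.1
        refine this.congr (Eventually.of_forall fun s => ?_)
        refine integral_congr_ae (Eventually.of_forall fun ω => ?_)
        simp only
        rw [Real.norm_of_nonneg (Real.rpow_nonneg (hY_nonneg s ω) _)]
    have := hiQ.integral_prod_right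
    simpa only [intervalIntegral.integral_of_le zero_le_one] using this
  obtain ⟨C, hC, hup⟩ := sd_D_upper f hf_cont ρ α γ hρ hα hβ hA
  have hi1 : ∀ t, 1 ≤ t → Integrable (fun ω => C * ((∫ s in (0:ℝ)..1, (Y s ω) ^ α) +
      sdA γ α (fun s => Y s ω) t + t ^ (1 + γ + α))) μ := fun t ht =>
    ((hJ.add (hYd t ht).1).add (integrable_const _)).const_mul C
  have hiD1 : ∀ t, 1 ≤ t → Integrable (fun ω => sdD f (fun s => Y s ω) t) μ := by
    intro t ht
    refine (hi1 t ht).mono' (hmeas t (by linarith)).aestronglyMeasurable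
      (Eventually.of_forall fun ω => ?_)
    rw [Real.norm_of_nonneg (sd_D_nonneg f hf_nonneg _ (fun s => hY_nonneg s ω) t (by linarith))]
    exact hup _ (hY_cont ω) (fun s => hY_nonneg s ω) t ht
  refine ⟨hmeas, ?_, ?_⟩
  · intro t ht
    refine (hiD1 (max t 1) (le_max_right _ _)).mono' (hmeas t ht).aestronglyMeasurable
      (Eventually.of_forall fun ω => ?_)
    rw [Real.norm_of_nonneg (sd_D_nonneg f hf_nonneg _ (fun s => hY_nonneg s ω) t ht)]
    exact sd_D_mono f hf_cont hf_nonneg _ (hY_cont ω) (fun s => hY_nonneg s ω) t _ ht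
      (le_max_left _ _)
  · set J := ∫ ω, (∫ s in (0:ℝ)..1, (Y s ω) ^ α) ∂μ with hJdef
    have hJ0 : 0 ≤ J := integral_nonneg fun ω =>
      intervalIntegral.integral_nonneg zero_le_one fun s _ => Real.rpow_nonneg (hY_nonneg s ω) _
    refine ⟨C * (J + |CA| + 1), by positivity, fun t ht => ?_⟩
    refine (integral_mono (hiD1 t ht) (hi1 t ht)
      (fun ω => hup _ (hY_cont ω) (fun s => hY_nonneg s ω) t ht)).trans ?_
    rw [integral_const_mul, integral_add (f := fun ω => (∫ s in (0:ℝ)..1, (Y s ω) ^ α) +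
      sdA γ α (fun s => Y s ω) t) (hJ.add (hYd t ht).1) (integrable_const _),
      integral_add hJ (hYd t ht).1, mul_assoc]
    refine mul_le_mul_of_nonneg_left ?_ hC.le
    have h1 : 1 ≤ t ^ (1 + γ + α) := Real.one_le_rpow ht (by linarith)
    have h2 := (hYd t ht).2
    have h3 : CA * t ^ (1 + γ + α) ≤ |CA| * t ^ (1 + γ + α) :=
      mul_le_mul_of_nonneg_right (le_abs_self _) (by linarith)
    simp only [integral_const, probReal_univ, one_smul]
    nlinarith

lemma sd_aemeas {Ω Ω' : Type*} {m : MeasurableSpace Ω} {m' : MeasurableSpace Ω'}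
    (μ : Measure Ω) [IsProbabilityMeasure μ] (μ' : Measure Ω') [IsProbabilityMeasure μ']
    (Z : ℝ → Ω → ℝ) (hZm : ∀ t, Measurable (Z t)) (Zl : Ω' → ℝ)
    (hZ : ∀ g : BoundedContinuousFunction ℝ ℝ,
      Tendsto (fun t : ℝ => ∫ ω, g (Z t ω) ∂μ) atTop (nhds (∫ ω', g (Zl ω') ∂μ'))) :
    AEMeasurable Zl μ' := by
  have hb : ∀ x, ‖Real.arctan x‖ ≤ Real.pi / 2 := fun x => by
    rw [Real.norm_eq_abs, abs_le]
    exact ⟨(Real.neg_pi_div_two_lt_arctan x).le, (Real.arctan_lt_pi_div_two x).le⟩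
  let g : BoundedContinuousFunction ℝ ℝ :=
    BoundedContinuousFunction.ofNormedAddCommGroup Real.arctan Real.continuous_arctan _ hb
  have hg : ∀ x, g x = Real.arctan x := fun x => rfl
  by_cases hm : AEStronglyMeasurable (fun ω' => g (Zl ω')) μ'
  · have h1 : AEMeasurable (fun ω' => Real.tan (g (Zl ω'))) μ' :=
      (show Measurable Real.tan by
        have : Real.tan = fun x => Real.sin x / Real.cos x := by
          funext x; exact Real.tan_eq_sin_div_cos x
        rw [this]
        exact Real.measurable_sin.div Real.measurable_cos).comp_aemeasurable hm.aemeasurable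
    simpa only [hg, Real.tan_arctan] using h1
  · exfalso
    have h1 : ∫ ω', g (Zl ω') ∂μ' = 0 :=
      integral_undef fun h => hm h.aestronglyMeasurable
    have h2 : ∫ ω', (g + 1) (Zl ω') ∂μ' = 0 := by
      refine integral_undef fun h => hm ?_
      have := h.aestronglyMeasurable.sub (aestronglyMeasurable_const (b := (1:ℝ)))
      refine this.congr (Eventually.of_forall fun ω => ?_)
      simp
    have t1 := hZ g
    have t2 := hZ (g + 1)
    rw [h1] at t1
    rw [h2] at t2
    have e : (fun t : ℝ => ∫ ω, (g + 1) (Z t ω) ∂μ) = fun t => (∫ ω, g (Z t ω) ∂μ) + 1 := by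
      funext t
      have hi : Integrable (fun ω => g (Z t ω)) μ := by
        refine Integrable.of_bound (g.continuous.measurable.comp (hZm t)).aestronglyMeasurable
          (Real.pi / 2) (Eventually.of_forall fun ω => hb _)
      have := integral_add hi (integrable_const (1:ℝ))
      simpa using this
    rw [e] at t2
    have := tendsto_nhds_unique t2 (t1.add_const 1)
    norm_num at this

lemma sd_slutsky {Ω Ω' : Type*} {m : MeasurableSpace Ω} {m' : MeasurableSpace Ω'}
    (μ : Measure Ω) [IsProbabilityMeasure μ] (μ' : Measure Ω') [IsProbabilityMeasure μ']
    (Z U : ℝ → Ω → ℝ) (hZm : ∀ t, Measurable (Z t)) (hUm : ∀ t, Measurable (U t)) (Zl : Ω' → ℝ)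
    (hZ : ∀ g : BoundedContinuousFunction ℝ ℝ,
      Tendsto (fun t : ℝ => ∫ ω, g (Z t ω) ∂μ) atTop (nhds (∫ ω', g (Zl ω') ∂μ')))
    (hU : ∀ᵐ ω ∂μ, Tendsto (fun t => U t ω) atTop (nhds 0))
    (G : ℝ × ℝ → ℝ) (hG : Continuous G) (g : BoundedContinuousFunction ℝ ℝ) :
    Tendsto (fun t : ℝ => ∫ ω, g (G (Z t ω, U t ω)) ∂μ) atTop
      (nhds (∫ ω', g (G (Zl ω', 0)) ∂μ')) := by
  have hZl := sd_aemeas μ μ' Z hZm Zl hZ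
  have hD : TendstoInDistribution Z atTop Zl (fun _ => μ) μ' := by
    refine ⟨fun t => (hZm t).aemeasurable, hZl, ?_⟩
    refine ProbabilityMeasure.tendsto_iff_forall_integral_tendsto.2 fun g => ?_
    have h2 : ∫ x, g x ∂(μ'.map Zl) = ∫ ω', g (Zl ω') ∂μ' :=
      integral_map hZl g.continuous.aestronglyMeasurable
    have h1 : ∀ t, ∫ x, g x ∂(μ.map (Z t)) = ∫ ω, g (Z t ω) ∂μ := fun t =>
      integral_map (hZm t).aemeasurable g.continuous.aestronglyMeasurable
    show Tendsto (fun t => ∫ x, g x ∂(μ.map (Z t))) atTop (nhds (∫ x, g x ∂(μ'.map Zl)))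
    simp only [h1, h2]
    exact hZ g
  have hUM : TendstoInMeasure μ U atTop (fun _ => (0:ℝ)) := by
    intro ε hε
    refine tendsto_of_seq_tendsto fun u hu => ?_
    exact tendstoInMeasure_of_tendsto_ae (f := fun n => U (u n)) (g := fun _ => (0:ℝ))
      (fun n => (hUm _).aestronglyMeasurable)
      (by filter_upwards [hU] with ω hω using hω.comp hu) ε hε
  have hR := hD.continuous_comp_prodMk_of_tendstoInMeasure_const hG hUM
    (fun t => (hUm t).aemeasurable)
  have ht : Tendsto (fun t => ∫ x, g x ∂(μ.map fun ω => G (Z t ω, U t ω))) atTop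
      (nhds (∫ x, g x ∂(μ'.map fun ω' => G (Zl ω', 0)))) :=
    ProbabilityMeasure.tendsto_iff_forall_integral_tendsto.1 hR.tendsto g
  have h2 : ∫ x, g x ∂(μ'.map fun ω' => G (Zl ω', 0)) = ∫ ω', g (G (Zl ω', 0)) ∂μ' :=
    integral_map hR.aemeasurable_limit g.continuous.aestronglyMeasurable
  have h1 : ∀ t, ∫ x, g x ∂(μ.map fun ω => G (Z t ω, U t ω)) = ∫ ω, g (G (Z t ω, U t ω)) ∂μ :=
    fun t => integral_map (hR.forall_aemeasurable t) g.continuous.aestronglyMeasurable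
  simp only [h1, h2] at ht
  exact ht

lemma sd_A_meas {Ω : Type*} {m : MeasurableSpace Ω} (γ α : ℝ) (Y : ℝ → Ω → ℝ)
    (hY_cont : ∀ ω, Continuous fun t => Y t ω) (hYm : ∀ t, Measurable (Y t)) (t : ℝ) :
    Measurable fun ω => sdA γ α (fun s => Y s ω) t := by
  have hYu : Measurable (Function.uncurry Y) :=
    measurable_uncurry_of_continuous_of_measurable hY_cont hYm
  have h1 : Measurable (Function.uncurry fun (s : ℝ) (ω : Ω) => s ^ γ * (Y s ω) ^ α) :=
    (measurable_fst.pow_const γ).mul (hYu.pow_const α)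
  exact sd_meas_param _ h1 1 t

/-- polynomial a.s. upper bound on `A` -/
lemma sd_A_upper {Ω : Type*} {m : MeasurableSpace Ω} (μ : Measure Ω) [IsProbabilityMeasure μ]
    (α γ : ℝ) (hα : 0 ≤ α) (hβ : 0 < γ + α)
    (Y : ℝ → Ω → ℝ)
    (hY_nonneg : ∀ t ω, 0 ≤ Y t ω) (hY_cont : ∀ ω, Continuous fun t => Y t ω)
    (CA : ℝ) (hYd : ∀ t : ℝ, 1 ≤ t →
      Integrable (fun ω => sdA γ α (fun s => Y s ω) t) μ ∧
      ∫ ω, sdA γ α (fun s => Y s ω) t ∂μ ≤ CA * t ^ (1 + γ + α)) (e : ℝ) (he : 0 < e) :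
    ∀ᵐ ω ∂μ, ∃ C', ∀ᶠ t in atTop, sdA γ α (fun s => Y s ω) t ≤ C' * t ^ (1 + γ + α + e) := by
  have key := sd_borel μ (fun s ω => sdA γ α (fun s => Y s ω) (max s 1)) univ |CA| (1 + γ + α)
    (1 + γ + α + e) (by linarith) (by linarith) (abs_nonneg _) ?_
  · filter_upwards [key] with ω hω
    refine ⟨2 ^ (1 + γ + α + e), ?_⟩
    filter_upwards [hω (mem_univ _), eventually_ge_atTop 1] with t ht ht1
    rw [max_eq_left ht1] at ht
    exact (le_abs_self _).trans ht
  · intro t ht l hl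
    have hn : ∀ ω, 0 ≤ sdA γ α (fun s => Y s ω) t := fun ω =>
      sd_A_nonneg γ α _ (fun s => hY_nonneg s ω) t ht
    have hmk := mul_meas_ge_le_integral_of_nonneg (μ := μ) (Eventually.of_forall hn) (hYd t ht).1 l
    have hsub : {ω | ω ∈ univ ∧ ∃ s ∈ Icc 0 t, l < |sdA γ α (fun s => Y s ω) (max s 1)|} ⊆
        {ω | l ≤ sdA γ α (fun s => Y s ω) t} := by
      rintro ω ⟨-, s, hs, hls⟩
      rw [abs_of_nonneg (sd_A_nonneg γ α _ (fun s => hY_nonneg s ω) _ (le_max_right _ _))] at hls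
      exact hls.le.trans (sd_A_mono γ α hα _ (hY_cont ω) (fun s => hY_nonneg s ω) _ _
        (le_max_right _ _) (max_le hs.2 ht))
    refine (measure_mono hsub).trans ?_
    rw [← ofReal_measureReal]
    refine ENNReal.ofReal_le_ofReal ?_
    rw [le_div_iff₀ hl, mul_comm]
    refine hmk.trans ((hYd t ht).2.trans ?_)
    exact mul_le_mul_of_nonneg_right (le_abs_self _) (by positivity)

lemma sd_path_U (Sf Df Af Mf : ℝ → ℝ) (p δ C ρ : ℝ) (hδ : 0 < δ) (hδp : δ < p)
    (hS : ∀ t, Sf t = Sf 0 + Df t + Mf t) (hS0 : ∀ t, 0 ≤ Sf t)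
    (hM : ∀ᶠ t in atTop, |Mf t| ≤ C * t ^ (p - δ))
    (hA0 : ∀ t, 1 ≤ t → 0 ≤ Af t)
    (hD : ∀ ε > 0, ∀ᶠ t in atTop, |Df t - 2 * ρ * Af t| ≤ ε * (Af t + t ^ p)) :
    Tendsto (fun t => (Sf t / t ^ p - 2 * ρ * (Af t / t ^ p)) / (Af t / t ^ p + 1)) atTop
      (nhds 0) := by
  rw [Metric.tendsto_nhds]
  intro ε hε
  filter_upwards [hM, hD (ε / 4) (by positivity), eventually_ge_atTop 1,
    sd_ev C (p - δ) p (ε / 4) (by linarith) (by positivity),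
    sd_ev (Sf 0) 0 p (ε / 4) (by linarith) (by positivity)] with t h1 h2 ht h3 h4
  have hp : 0 < t ^ p := by positivity
  have hA := hA0 t ht
  have e : (Sf t / t ^ p - 2 * ρ * (Af t / t ^ p)) / (Af t / t ^ p + 1) =
      (Sf t - 2 * ρ * Af t) / (Af t + t ^ p) := by
    field_simp
  have hpos : 0 < Af t + t ^ p := by linarith
  rw [e, Real.dist_eq, sub_zero, abs_div, abs_of_pos hpos, div_lt_iff₀ hpos]
  rw [Real.rpow_zero, mul_one] at h4
  have h5 : |Sf t - 2 * ρ * Af t| ≤ Sf 0 + |Mf t| + |Df t - 2 * ρ * Af t| := by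
    rw [hS t]
    have : Sf 0 + Df t + Mf t - 2 * ρ * Af t = Sf 0 + Mf t + (Df t - 2 * ρ * Af t) := by ring
    rw [this]
    refine (abs_add_le _ _).trans (add_le_add_left ((abs_add_le _ _).trans ?_) _)
    rw [abs_of_nonneg (hS0 0)]
  have : 0 ≤ ε * Af t := by positivity
  have : 0 < ε * t ^ p := by positivity
  nlinarith

lemma sd_D_cont (f : ℝ → ℝ → ℝ)
    (hf_cont : ContinuousOn (fun p : ℝ × ℝ => f p.1 p.2) (Set.Ici 0 ×ˢ Set.Ici 0))
    (y : ℝ → ℝ) (hy : Continuous y) (hy0 : ∀ s, 0 ≤ y s) :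
    ContinuousOn (fun t => sdD f y t) (Ici 0) := by
  have hF : Continuous fun s : ℝ => 2 * f (max s 0) (y s) + 1 := by
    have : ContinuousOn (fun s : ℝ => f (max s 0) (y s)) univ :=
      hf_cont.comp (f := fun s : ℝ => (max s 0, y s)) (by fun_prop)
        (fun p _ => mem_prod.2 ⟨mem_Ici.2 (le_max_right _ _), mem_Ici.2 (hy0 _)⟩)
    exact (continuous_const.mul (continuousOn_univ.1 this)).add continuous_const
  have h1 : Continuous fun t : ℝ => ∫ s in (0:ℝ)..t, (2 * f (max s 0) (y s) + 1) :=
    intervalIntegral.continuous_primitive (fun a b => hF.intervalIntegrable a b) 0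
  refine h1.continuousOn.congr fun t ht => ?_
  refine intervalIntegral.integral_congr fun s hs => ?_
  rw [uIcc_of_le ht] at hs
  simp only [max_eq_left hs.1]

lemma sd_M_bound {Ω : Type*} {m : MeasurableSpace Ω} (μ : Measure Ω) [IsProbabilityMeasure μ]
    (ℱ : Filtration ℝ m) (M S D : ℝ → Ω → ℝ)
    (hSDM : ∀ t ω, S t ω = S 0 ω + D t ω + M t ω)
    (hS0 : ∀ t ω, 0 ≤ S t ω) (hSc : ∀ ω, Continuous fun t => S t ω)
    (hSa : ∀ t, Measurable[ℱ t] (S t))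
    (hDm : ∀ t, 0 ≤ t → Measurable (D t)) (hDz : ∀ ω, D 0 ω = 0)
    (hDmono : ∀ ω s t, 0 ≤ s → s ≤ t → D s ω ≤ D t ω)
    (hDint : ∀ t, 0 ≤ t → Integrable (D t) μ)
    (hDc : ∀ ω, ContinuousOn (fun t => D t ω) (Ici 0))
    (τ : ℕ → Ω → ℝ)
    (hτ_nonneg : ∀ N ω, 0 ≤ τ N ω)
    (hτ_tend : ∀ ω, Tendsto (fun N => τ N ω) atTop atTop)
    (hM_int : ∀ (N : ℕ) (t : ℝ), 0 ≤ t → Integrable (fun ω => (M (min t (τ N ω)) ω) ^ 2) μ)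
    (hM_loc : ∀ (N : ℕ) (s t : ℝ), 0 ≤ s → s ≤ t →
      (μ[(fun ω => M (min t (τ N ω)) ω) | ℱ s]) =ᵐ[μ] fun ω => M (min s (τ N ω)) ω)
    (hM_qv : ∀ (N : ℕ) (s t : ℝ), 0 ≤ s → s ≤ t →
      (μ[(fun ω => (M (min t (τ N ω)) ω) ^ 2
          - 4 * ∫ u in (0:ℝ)..(min t (τ N ω)), S u ω) | ℱ s])
        =ᵐ[μ] fun ω => (M (min s (τ N ω)) ω) ^ 2
          - 4 * ∫ u in (0:ℝ)..(min s (τ N ω)), S u ω)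
    (p C : ℝ) (hp : 1 < p) (hC : 0 < C) (hDe : ∀ t, 1 ≤ t → ∫ ω, D t ω ∂μ ≤ C * t ^ p)
    (r : ℝ) (hr : (p + 1) / 2 < r) :
    ∀ᵐ ω ∂μ, ∀ᶠ t in atTop, |M t ω| ≤ 2 ^ r * t ^ r := by
  have hMc : ∀ ω, ContinuousOn (fun t => M t ω) (Ici 0) := by
    intro ω
    have : ContinuousOn (fun t => S t ω - S 0 ω - D t ω) (Ici 0) :=
      ((hSc ω).continuousOn.sub continuousOn_const).sub (hDc ω)
    refine this.congr fun t _ => ?_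
    simp only
    rw [hSDM t ω]
    ring
  have key : ∀ K : ℕ, ∀ᵐ ω ∂μ, ω ∈ {ω | S 0 ω ≤ K} → ∀ᶠ t in atTop, |M t ω| ≤ 2 ^ r * t ^ r := by
    intro K
    have hG : MeasurableSet[ℱ 0] {ω | S 0 ω ≤ K} :=
      (hSa 0) measurableSet_Iic
    have hc2 : 0 < 4 * (K + C) := by positivity
    refine sd_borel μ M _ (Real.sqrt (4 * (K + C))) ((p + 1) / 2) r hr (by linarith)
      (Real.sqrt_nonneg _) ?_
    intro t ht l hl
    have ht0 : 0 < t := by linarith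
    refine sd_maximal μ ℱ M hMc τ hτ_tend hM_int hM_loc _ hG t ht0
      (Real.sqrt (4 * (K + C)) * t ^ ((p + 1) / 2))
      (mul_pos (Real.sqrt_pos.2 hc2) (Real.rpow_pos_of_pos ht0 _)) ?_ l hl
    intro N
    refine (sd_second_moment μ ℱ M S D hSDM hS0 hSc (fun t => (hSa t).mono (ℱ.le t) le_rfl) hDm hDz
      hDmono hDint τ hτ_nonneg hτ_tend hM_int hM_loc hM_qv _ hG K (Nat.cast_nonneg _)
      (fun ω h => h) t ht0.le N).trans ?_
    rw [mul_pow, Real.sq_sqrt hc2.le, ← Real.rpow_natCast, ← Real.rpow_mul ht0.le]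
    have : (p + 1) / 2 * ((2:ℕ):ℝ) = p + 1 := by push_cast; ring
    rw [this, Real.rpow_add ht0, Real.rpow_one]
    have h1 : 1 ≤ t ^ p := Real.one_le_rpow ht (by linarith)
    have h2 := hDe t ht
    have h3 : (K:ℝ) ≤ K * t ^ p := le_mul_of_one_le_right (Nat.cast_nonneg _) h1
    have h4 : t * (K + ∫ ω, D t ω ∂μ) ≤ t * ((K + C) * t ^ p) :=
      mul_le_mul_of_nonneg_left (by linarith) ht0.le
    linarith
  have := ae_all_iff.2 key
  filter_upwards [this] with ω hω
  obtain ⟨K, hK⟩ := exists_nat_ge (S 0 ω)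
  exact hω K hK

/-- Theorem 1.3 of the paper: under (A_f) and (A_Y), the process `X = √S` satisfies
`log X_t / log t → (1+γ+α)/2` a.s. and `t^{-(1+γ+α)/2} X_t → (2ρÃ)^{1/2}` in
distribution (convergence in distribution is expressed via bounded continuous
test functions). -/
theorem stmt_19 {Ω : Type*} {m : MeasurableSpace Ω} (μ : Measure Ω) [IsProbabilityMeasure μ]
    (ℱ : Filtration ℝ m)
    -- the function f and Assumption (A_f)
    (f : ℝ → ℝ → ℝ)
    (hf_cont : ContinuousOn (fun p : ℝ × ℝ => f p.1 p.2) (Set.Ici 0 ×ˢ Set.Ici 0))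
    (hf_nonneg : ∀ t y : ℝ, 0 ≤ t → 0 ≤ y → 0 ≤ f t y)
    (ρ α γ : ℝ) (hρ : 0 < ρ) (hα : 0 ≤ α) (hβ : 0 < γ + α)
    (hA : ∀ ε > (0:ℝ), ∃ r ≥ (0:ℝ), ∀ t y : ℝ, 0 ≤ t → 0 ≤ y → r ≤ t + y →
      |f t y * (1 + t) ^ (-γ) * (1 + y) ^ (-α) - ρ| ≤ ε)
    -- the processes Y and S
    (Y S : ℝ → Ω → ℝ)
    (hY_nonneg : ∀ t ω, 0 ≤ Y t ω) (hY_cont : ∀ ω, Continuous fun t => Y t ω)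
    (hY_adapted : Adapted ℱ Y)
    (hS_nonneg : ∀ t ω, 0 ≤ S t ω) (hS_cont : ∀ ω, Continuous fun t => S t ω)
    (hS_adapted : Adapted ℱ S)
    -- M = 2∫√S dB is a local martingale with quadratic variation 4∫_0^t S_s ds,
    -- localized by the stopping times τ_N = inf{t : S_t ≥ N}
    (τ : ℕ → Ω → ℝ)
    (hτ_nonneg : ∀ N ω, 0 ≤ τ N ω)
    (hτ_bound : ∀ N ω (t : ℝ), 0 ≤ t → t ≤ τ N ω → S t ω ≤ N)
    (hτ_tend : ∀ ω, Tendsto (fun N => τ N ω) atTop atTop)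
    (hM_int : ∀ (N : ℕ) (t : ℝ), 0 ≤ t →
      Integrable (fun ω => (driftM f Y S (min t (τ N ω)) ω) ^ 2) μ)
    (hM_loc : ∀ (N : ℕ) (s t : ℝ), 0 ≤ s → s ≤ t →
      (μ[(fun ω => driftM f Y S (min t (τ N ω)) ω) | ℱ s])
        =ᵐ[μ] fun ω => driftM f Y S (min s (τ N ω)) ω)
    (hM_qv : ∀ (N : ℕ) (s t : ℝ), 0 ≤ s → s ≤ t →
      (μ[(fun ω => (driftM f Y S (min t (τ N ω)) ω) ^ 2
          - 4 * ∫ u in (0:ℝ)..(min t (τ N ω)), S u ω) | ℱ s])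
        =ᵐ[μ] fun ω => (driftM f Y S (min s (τ N ω)) ω) ^ 2
          - 4 * ∫ u in (0:ℝ)..(min s (τ N ω)), S u ω)
    -- Hypothesis (A_Y)(a): ∫_0^1 E[Y_t^α] dt < ∞
    (hYa : ∀ t ∈ Set.Icc (0:ℝ) 1, Integrable (fun ω => (Y t ω) ^ α) μ)
    (hYa' : IntervalIntegrable (fun t => ∫ ω, (Y t ω) ^ α ∂μ) MeasureTheory.volume 0 1)
    -- Hypothesis (A_Y)(b): A_t/t^{1+γ+α} converges in distribution to Ã ≥ 0
    {Ω' : Type*} {m' : MeasurableSpace Ω'} (μ' : Measure Ω') [IsProbabilityMeasure μ']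
    (Atil : Ω' → ℝ) (hAtil_nonneg : ∀ ω', 0 ≤ Atil ω')
    (hYb : ∀ g : BoundedContinuousFunction ℝ ℝ,
      Tendsto (fun t : ℝ =>
          ∫ ω, g ((∫ s in (1:ℝ)..t, s ^ γ * (Y s ω) ^ α) / t ^ (1 + γ + α)) ∂μ)
        atTop (nhds (∫ ω', g (Atil ω') ∂μ')))
    -- Hypothesis (A_Y)(c): for every ε > 0, t^ε A_t/t^{1+γ+α} → ∞ a.s.
    (hYc : ∀ ε > (0:ℝ), ∀ᵐ ω ∂μ,
      Tendsto (fun t : ℝ =>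
          t ^ ε * (∫ s in (1:ℝ)..t, s ^ γ * (Y s ω) ^ α) / t ^ (1 + γ + α))
        atTop atTop)
    -- Hypothesis (A_Y)(d): sup_{t≥1} E[A_t]/t^{1+γ+α} < ∞
    (hYd : ∃ CA : ℝ, ∀ t : ℝ, 1 ≤ t →
      Integrable (fun ω => ∫ s in (1:ℝ)..t, s ^ γ * (Y s ω) ^ α) μ ∧
      ∫ ω, (∫ s in (1:ℝ)..t, s ^ γ * (Y s ω) ^ α) ∂μ ≤ CA * t ^ (1 + γ + α)) :
    -- Conclusions for X = √S
    (∀ᵐ ω ∂μ,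
      Tendsto (fun t : ℝ => Real.log (Real.sqrt (S t ω)) / Real.log t)
        atTop (nhds ((1 + γ + α) / 2))) ∧
    ∀ g : BoundedContinuousFunction ℝ ℝ,
      Tendsto (fun t : ℝ => ∫ ω, g (Real.sqrt (S t ω) / t ^ ((1 + γ + α) / 2)) ∂μ)
        atTop (nhds (∫ ω', g (Real.sqrt (2 * ρ * Atil ω')) ∂μ')) := by
  obtain ⟨CA, hYd⟩ := hYd
  have hYd : ∀ t : ℝ, 1 ≤ t → Integrable (fun ω => sdA γ α (fun s => Y s ω) t) μ ∧
      ∫ ω, sdA γ α (fun s => Y s ω) t ∂μ ≤ CA * t ^ (1 + γ + α) := hYd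
  have hYc : ∀ ε > (0:ℝ), ∀ᵐ ω ∂μ,
      Tendsto (fun t : ℝ => t ^ ε * sdA γ α (fun s => Y s ω) t / t ^ (1 + γ + α))
        atTop atTop := hYc
  have hYm : ∀ t, Measurable (Y t) := fun t => (hY_adapted t).mono (ℱ.le t) le_rfl
  have hSm : ∀ t, Measurable (S t) := fun t => (hS_adapted t).mono (ℱ.le t) le_rfl
  have hAm := sd_A_meas γ α Y hY_cont hYm
  obtain ⟨hDm, hDi, CD, hCD, hDe⟩ := sd_D_expect μ f hf_cont hf_nonneg ρ α γ hρ hα hβ hA Y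
    hY_nonneg hY_cont hYm hYa hYa' CA hYd
  have hSDM : ∀ t ω, S t ω = S 0 ω + sdD f (fun s => Y s ω) t + driftM f Y S t ω := by
    intro t ω
    simp only [driftM, sdD]
    ring
  set δ := (γ + α) / 4 with hδ
  have hMb : ∀ᵐ ω ∂μ, ∀ᶠ t in atTop, |driftM f Y S t ω| ≤
      2 ^ (1 + γ + α - δ) * t ^ (1 + γ + α - δ) :=
    sd_M_bound μ ℱ (driftM f Y S) S (fun t ω => sdD f (fun s => Y s ω) t) hSDM hS_nonneg hS_cont
      hS_adapted hDm (fun ω => by simp [sdD])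
      (fun ω s t hs hst => sd_D_mono f hf_cont hf_nonneg _ (hY_cont ω) (fun s => hY_nonneg s ω)
        s t hs hst) hDi
      (fun ω => sd_D_cont f hf_cont _ (hY_cont ω) (fun s => hY_nonneg s ω))
      τ hτ_nonneg hτ_tend hM_int hM_loc hM_qv (1 + γ + α) CD (by linarith) hCD hDe _
      (by linarith)
  refine ⟨?_, ?_⟩
  · have hA1 : ∀ᵐ ω ∂μ, ∀ n : ℕ, ∃ C', ∀ᶠ t in atTop,
        sdA γ α (fun s => Y s ω) t ≤ C' * t ^ (1 + γ + α + 1 / ((n:ℝ) + 1)) :=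
      ae_all_iff.2 fun n => sd_A_upper μ α γ hα hβ Y hY_nonneg hY_cont CA hYd _ (by positivity)
    have hA2 : ∀ᵐ ω ∂μ, ∀ n : ℕ, ∀ᶠ t in atTop,
        t ^ (1 + γ + α - 1 / ((n:ℝ) + 1)) ≤ sdA γ α (fun s => Y s ω) t := by
      refine ae_all_iff.2 fun n => ?_
      filter_upwards [hYc (1 / ((n:ℝ) + 1)) (by positivity)] with ω hω
      filter_upwards [hω.eventually_ge_atTop 1, eventually_gt_atTop 0] with t ht ht0
      rw [Real.rpow_sub ht0, div_le_iff₀ (Real.rpow_pos_of_pos ht0 _)]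
      rw [one_le_div (Real.rpow_pos_of_pos ht0 _)] at ht
      linarith
    obtain ⟨r, hr1, hr⟩ := sd_D_lower f hf_cont hf_nonneg ρ α γ hρ hα hA
    filter_upwards [hMb, hA1, hA2] with ω h1 h2 h3
    refine sd_path_log (fun t => S t ω) (fun t => sdD f (fun s => Y s ω) t)
      (fun t => sdA γ α (fun s => Y s ω) t) (fun t => driftM f Y S t ω) (1 + γ + α) δ
      (2 ^ (1 + γ + α - δ)) (2 * ρ + 1) ρ r (by linarith) (by linarith) hρ
      (fun t => hSDM t ω) (fun t => hS_nonneg t ω) h1 ?_ ?_ (by linarith) h2 h3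
    · filter_upwards [eventually_ge_atTop r] with t ht
      exact hr _ (hY_cont ω) (fun s => hY_nonneg s ω) t ht
    · filter_upwards [sd_D_asymp f hf_cont ρ α γ hρ hα hβ hA _ (hY_cont ω)
        (fun s => hY_nonneg s ω) 1 one_pos, eventually_ge_atTop 0] with t ht ht0
      have h5 := (abs_le.1 ht).2
      have h6 : 0 ≤ 2 * ρ * t ^ (1 + γ + α) := by positivity
      linarith
  · intro g
    have hsl := sd_slutsky μ μ' (fun t ω => sdA γ α (fun s => Y s ω) t / t ^ (1 + γ + α))
      (fun t ω => (S t ω / t ^ (1 + γ + α) -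
        2 * ρ * (sdA γ α (fun s => Y s ω) t / t ^ (1 + γ + α))) /
          (sdA γ α (fun s => Y s ω) t / t ^ (1 + γ + α) + 1))
      (fun t => (hAm t).div_const _)
      (fun t => (((hSm t).div_const _).sub (((hAm t).div_const _).const_mul _)).div
        (((hAm t).div_const _).add_const _)) Atil hYb ?_
      (fun q => Real.sqrt (2 * ρ * q.1 + q.2 * (q.1 + 1))) (by fun_prop) g
    · simp only [zero_mul, add_zero] at hsl
      refine hsl.congr' ?_
      filter_upwards [eventually_ge_atTop 1] with t ht
      refine integral_congr_ae (Eventually.of_forall fun ω => ?_)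
      have hp : 0 < t ^ (1 + γ + α) := by positivity
      have hA0 := sd_A_nonneg γ α _ (fun s => hY_nonneg s ω) t ht
      have hz : sdA γ α (fun s => Y s ω) t / t ^ (1 + γ + α) + 1 ≠ 0 := by positivity
      simp only
      congr 1
      rw [div_mul_cancel₀ _ hz, add_sub_cancel, Real.sqrt_div (hS_nonneg t ω)]
      congr 1
      rw [Real.sqrt_eq_rpow, ← Real.rpow_mul (by linarith)]
      congr 1
      ring
    · filter_upwards [hMb] with ω h1
      exact sd_path_U (fun t => S t ω) (fun t => sdD f (fun s => Y s ω) t)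
        (fun t => sdA γ α (fun s => Y s ω) t) (fun t => driftM f Y S t ω) (1 + γ + α) δ
        (2 ^ (1 + γ + α - δ)) ρ (by linarith) (by linarith)
        (fun t => hSDM t ω) (fun t => hS_nonneg t ω) h1
        (fun t ht => sd_A_nonneg γ α _ (fun s => hY_nonneg s ω) t ht)
        (fun ε hε => sd_D_asymp f hf_cont ρ α γ hρ hα hβ hA _ (hY_cont ω)
          (fun s => hY_nonneg s ω) ε hε)
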